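/- arXiv:2501.18570 — 3 statements merged into one kernel-verified Lean document; each statement's English description precedes it below -/
import Mathlib

section
/- For every n ≥ 2, the total variation distance between the law of X_n and the Poisson distribution with mean 2 − 2/n is at most 50/n; consequently, the total variation distance between the law of X_n and the Poisson distribution with mean 2 is at most 52/n. Here the total variation distance between the law of X_n and a Poisson law with mean λ is (1/2) Σ_{m≥0} |P(X_n = m) − e^{−λ} λ^m / m!|. -/
/-- `P(Xₙ = m)`: the number of ordered pairs `(T₁, T₂)` of spanning trees of `K_n`
with exactly `m` common edges, divided by the number `n^(2(n-2))` of such pairs. -/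
noncomputable def probCommonEdgesEq (n m : ℕ) : ℝ :=
  (Nat.card {p : SimpleGraph (Fin n) × SimpleGraph (Fin n) //
      p.1.IsTree ∧ p.2.IsTree ∧ Nat.card (p.1 ⊓ p.2).edgeSet = m} : ℝ) /
    (n : ℝ) ^ (2 * (n - 2))

/-- The total variation distance between the law of `Xₙ` and the Poisson distribution
with mean `lam`: `(1/2) Σ_{m≥0} |P(Xₙ = m) − e^(−lam) lam^m / m!|`. -/
noncomputable def tvDistPoisson (n : ℕ) (lam : ℝ) : ℝ :=
  (1 / 2) * ∑' m : ℕ,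
    |probCommonEdgesEq n m - Real.exp (-lam) * lam ^ m / m.factorial|

/-!
Fix a tree `T` on `n` vertices and let `S` be a uniform spanning tree. Giving the edges of `T` the
weight `x` in the matrix-tree theorem shows that the generating function of `|E(S) ∩ E(T)|` is
proportional to `det (n + (x - 1) L)`, where `L` is the Laplacian of `T`. It factors over the
eigenvalues `λ` of `L` into the generating functions `1 - p + p x` of Bernoulli laws with
`p = λ / n`. By Le Cam's inequality, the law of `|E(S) ∩ E(T)|` is within `∑ p ^ 2` of the Poisson
law of mean `∑ p = tr L / n = 2 - 2 / n`, and `∑ p ^ 2 = tr L ^ 2 / n ^ 2 = ∑ (d ^ 2 + d) / n ^ 2`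
over the degrees `d` of `T`. Averaging over `T` gives the order `1 / n`, since the second factorial
moment of the degree of `v` in a uniform spanning tree is bounded: that degree is the number of
edges shared with the star at `v`, hence itself a sum of independent Bernoulli variables.
-/

namespace TreeOverlap

open Finset

section Determinants

open Matrix

variable {V R : Type*} [Fintype V] [DecidableEq V] [CommRing R]

lemma det_eq_prod_diag_of_rank {M : Matrix V V R} (d : V → ℕ)
    (h : ∀ i j, i ≠ j → d i ≤ d j → M i j = 0) : M.det = ∏ i, M i i := by
  rw [det_apply, Finset.sum_eq_single 1 _ (by simp)]
  · simp
  intro σ _ hσ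
  suffices ∃ i, σ i ≠ i ∧ d (σ i) ≤ d i by
    obtain ⟨i, hne, hle⟩ := this
    have hprod : ∏ j, M (σ j) j = 0 := Finset.prod_eq_zero (mem_univ i) (h _ _ hne hle)
    rw [hprod, smul_zero]
  by_contra! hlt
  obtain ⟨i, hi⟩ : ∃ i, σ i ≠ i := by simpa [Equiv.ext_iff] using hσ
  refine (Equiv.sum_comp σ d).not_gt (Finset.sum_lt_sum (fun j _ => ?_) ⟨i, mem_univ i, hlt i hi⟩)
  by_cases hj : σ j = j
  · rw [hj]
  · exact (hlt j hj).le

lemma det_eq_zero_of_mulVec_eq_zero {M : Matrix V V R} {v : V → R} {i : V} (hi : v i = 1)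
    (hv : M *ᵥ v = 0) : M.det = 0 := by
  have h : M.det • v = 0 := by
    rw [← one_mulVec v, ← smul_mulVec, ← adjugate_mul, ← mulVec_mulVec, hv, mulVec_zero]
  simpa [hi] using congrFun h i

lemma det_eq_mul_det_updateRow_single {B : Matrix V V R} {r : V} {c : R}
    (h : B *ᵥ 1 = c • Pi.single r 1) : B.det = c * (B.updateRow r (Pi.single r 1)).det := by
  have hadj : B.det • (1 : V → R) = c • B.adjugate.col r := by
    rw [← one_mulVec (1 : V → R), ← smul_mulVec, ← adjugate_mul, ← mulVec_mulVec, h, mulVec_smul,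
      mulVec_single_one]
  simpa [adjugate_apply] using congrFun hadj r

lemma det_add_one_eq {A : Matrix V V R} (hrow : A *ᵥ 1 = 0) (hcol : 1 ᵥ* A = 0) (r : V) :
    (A + of fun _ _ => 1).det =
      (Fintype.card V : R) ^ 2 * (A.updateRow r (Pi.single r 1)).det := by
  set M : Matrix V V R := A + of fun _ _ => 1 with hM
  have hsum : ∑ k, (1 : V → R) k • M k = (Fintype.card V : R) • (1 : V → R) := by
    rw [← vecMul_eq_sum, hM, vecMul_add, hcol, zero_add]
    funext j
    simp [vecMul, dotProduct]
  have hM_row : M.det = Fintype.card V * (M.updateRow r 1).det := by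
    have h := det_updateRow_sum M r 1
    rw [hsum, det_updateRow_smul] at h
    simpa using h.symm
  have hM_A : (M.updateRow r 1).det = (A.updateRow r 1).det := by
    apply det_eq_of_forall_row_eq_smul_add_const (fun i => if i = r then 0 else 1) r
    · simp
    · intro i j
      by_cases hi : i = r
      · subst hi; simp
      · simp [hi, hM]
  have hA_sum : A.updateRow r 1 *ᵥ 1 = (Fintype.card V : R) • Pi.single r 1 := by
    funext i
    have := congrFun hrow i
    by_cases hi : i = r
    · subst hi; simp [mulVec, dotProduct]
    · simp_all [mulVec]
  rw [hM_row, hM_A, det_eq_mul_det_updateRow_single hA_sum, updateRow_idem]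
  ring

/-- The Laplacian matrix of the complete graph whose pair `ij` has weight `w i j`; the diagonal
values `w i i` cancel. -/
def weightedLapMatrix (w : V → V → R) : Matrix V V R :=
  diagonal (fun i => ∑ j, w i j) - of w

lemma weightedLapMatrix_row (w : V → V → R) (i : V) :
    weightedLapMatrix w i = ∑ k, w i k • (Pi.single i 1 - Pi.single k 1) := by
  funext j
  simp [weightedLapMatrix, mul_sub, Finset.sum_sub_distrib, diagonal_apply, Pi.single_apply,
    eq_comm]

lemma weightedLapMatrix_mulVec_one (w : V → V → R) : weightedLapMatrix w *ᵥ 1 = 0 := by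
  funext i
  rw [weightedLapMatrix, sub_mulVec, Pi.sub_apply, mulVec_diagonal]
  simp [mulVec, dotProduct]

lemma one_vecMul_weightedLapMatrix {w : V → V → R} (hw : ∀ i j, w i j = w j i) :
    1 ᵥ* weightedLapMatrix w = 0 := by
  have hT : (weightedLapMatrix w)ᵀ = weightedLapMatrix w := by
    rw [weightedLapMatrix, transpose_sub, diagonal_transpose]
    congr 1
    ext i j
    exact hw j i
  rw [← hT, vecMul_transpose, weightedLapMatrix_mulVec_one]

end Determinants

section ParentFunctions

variable {V : Type*} {r i : V} {f g : V → V}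

/-- `f` is the parent function of a tree rooted at `r`, with the convention that `r` is its own
parent: iterating `f` leads every vertex to `r`. -/
structure IsParentFun (r : V) (f : V → V) : Prop where
  root : f r = r
  exists_iterate_eq : ∀ i, ∃ k, f^[k] i = r

/-- The undirected graph underlying the functional digraph of `f`, without its loops. -/
def parentGraph (f : V → V) : SimpleGraph V := SimpleGraph.fromRel fun i j => f i = j

lemma parentGraph_adj {j : V} : (parentGraph f).Adj i j ↔ i ≠ j ∧ (f i = j ∨ f j = i) :=
  SimpleGraph.fromRel_adj _ _ _

/-- The number of common edges of two graphs, `0` by the convention of `Set.ncard` when there are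
infinitely many. -/
noncomputable def numCommonEdges (G H : SimpleGraph V) : ℕ := (G ⊓ H).edgeSet.ncard

namespace IsParentFun

lemma eq_root_of_isPeriodicPt (hf : IsParentFun r f) {n : ℕ} (hn : 0 < n)
    (hi : Function.IsPeriodicPt f n i) : i = r := by
  obtain ⟨k, hk⟩ := hf.exists_iterate_eq i
  have hle : k ≤ k * n := Nat.le_mul_of_pos_right k hn
  rw [← (hi.const_mul k).eq, ← Nat.sub_add_cancel hle, Function.iterate_add_apply, hk,
    Function.iterate_fixed hf.root]

lemma apply_ne (hf : IsParentFun r f) (hi : i ≠ r) : f i ≠ i := fun h =>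
  hi (hf.eq_root_of_isPeriodicPt one_pos h)

lemma apply_apply_ne (hf : IsParentFun r f) (hi : i ≠ r) : f (f i) ≠ i := fun h =>
  hi (hf.eq_root_of_isPeriodicPt two_pos h)

lemma adj_apply (hf : IsParentFun r f) (hi : i ≠ r) : (parentGraph f).Adj i (f i) :=
  parentGraph_adj.2 ⟨(hf.apply_ne hi).symm, .inl rfl⟩

lemma edgeSet_parentGraph (hf : IsParentFun r f) :
    (parentGraph f).edgeSet = (fun i => s(i, f i)) '' {i | i ≠ r} := by
  ext e
  induction e using Sym2.ind with | _ a b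
  simp only [SimpleGraph.mem_edgeSet, Set.mem_image, Set.mem_ofPred_eq]
  constructor
  · intro hab
    obtain ⟨hne, rfl | rfl⟩ := parentGraph_adj.1 hab
    · exact ⟨a, fun h => hne (by rw [h, hf.root]), rfl⟩
    · exact ⟨b, fun h => hne (by rw [h, hf.root]), Sym2.eq_swap⟩
  · rintro ⟨i, hi, he⟩
    rw [← SimpleGraph.mem_edgeSet, ← he]
    exact hf.adj_apply hi

lemma injOn_edge (hf : IsParentFun r f) : Set.InjOn (fun i => s(i, f i)) {i | i ≠ r} := by
  intro i hi j _ hij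
  rcases Sym2.eq_iff.1 hij with ⟨h, -⟩ | ⟨h, h'⟩
  · exact h
  · exact absurd (by rw [h', ← h]) (hf.apply_apply_ne hi)

lemma numCommonEdges_parentGraph [Fintype V] [DecidableEq V] (hf : IsParentFun r f)
    (G : SimpleGraph V) [DecidableRel G.Adj] :
    numCommonEdges (parentGraph f) G = #{i ∈ univ.erase r | G.Adj i (f i)} := by
  have hedges : (parentGraph f ⊓ G).edgeSet =
      (fun i => s(i, f i)) '' ({i ∈ univ.erase r | G.Adj i (f i)} : Finset V) := by
    rw [SimpleGraph.edgeSet_inf, hf.edgeSet_parentGraph, ← Set.image_inter_preimage]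
    congr 1
    ext i
    simp
  have hinj := hf.injOn_edge.mono (s₁ := ↑({i ∈ univ.erase r | G.Adj i (f i)} : Finset V))
    fun i => by simp +contextual
  rw [numCommonEdges, hedges, hinj.ncard_image, Set.ncard_coe_finset]

lemma isTree_parentGraph [Finite V] (hf : IsParentFun r f) : (parentGraph f).IsTree := by
  have hreach (k : ℕ) (i : V) (hi : f^[k] i = r) : (parentGraph f).Reachable i r := by
    induction k generalizing i with
    | zero => exact hi ▸ .rfl
    | succ k ih =>
      by_cases hir : i = r
      · exact hir ▸ .rfl
      · exact (hf.adj_apply hir).reachable.trans (ih (f i) hi)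
  have hreach_root (i : V) : (parentGraph f).Reachable i r :=
    (hf.exists_iterate_eq i).elim fun k => hreach k i
  rw [SimpleGraph.isTree_iff_connected_and_card]
  have : Nonempty V := ⟨r⟩
  refine ⟨⟨fun a b => (hreach_root a).trans (hreach_root b).symm⟩, ?_⟩
  rw [Nat.card_coe_set_eq, hf.edgeSet_parentGraph, hf.injOn_edge.ncard_image,
    ← Set.ncard_univ, ← Set.ncard_sdiff_singleton_add_one (Set.mem_univ r)]
  congr 2
  ext i
  simp

lemma parentGraph_injective (hf : IsParentFun r f) (hg : IsParentFun r g)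
    (h : parentGraph f = parentGraph g) : f = g := by
  have hiter (k : ℕ) (i : V) (hi : g^[k] i = r) : f i = g i := by
    induction k generalizing i with
    | zero => rw [show i = r from hi, hf.root, hg.root]
    | succ k ih =>
      by_cases hir : i = r
      · rw [hir, hf.root, hg.root]
      · have hadj : (parentGraph f).Adj i (g i) := h ▸ hg.adj_apply hir
        refine (parentGraph_adj.1 hadj).2.resolve_right fun hback => ?_
        exact hg.apply_apply_ne hir (by rw [← ih (g i) hi, hback])
  funext i
  obtain ⟨k, hk⟩ := hg.exists_iterate_eq i
  exact hiter k i hk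

end IsParentFun

lemma exists_adj_dist_eq_add_one {G : SimpleGraph V} (hG : G.Connected) (hi : i ≠ r) :
    ∃ j, G.Adj i j ∧ G.dist i r = G.dist j r + 1 := by
  obtain ⟨p, hp⟩ := hG.exists_walk_length_eq_dist i r
  cases p with
  | nil => exact absurd rfl hi
  | @cons _ j _ hij q =>
    refine ⟨j, hij, ?_⟩
    have hq : G.dist j r ≤ q.length := SimpleGraph.dist_le q
    have htri : G.dist i r ≤ G.dist i j + G.dist j r := hG.dist_triangle
    rw [SimpleGraph.dist_eq_one_iff_adj.2 hij] at htri
    rw [SimpleGraph.Walk.length_cons] at hp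
    omega

lemma exists_isParentFun_parentGraph_le {G : SimpleGraph V} (hG : G.Connected) (r : V) :
    ∃ f, IsParentFun r f ∧ parentGraph f ≤ G := by
  classical
  choose! g hadj hdist using fun i (hi : i ≠ r) => exists_adj_dist_eq_add_one hG hi
  have hg_of_ne {i : V} (hi : i ≠ r) : Function.update g r r i = g i := Function.update_of_ne hi _ _
  have hiter (d : ℕ) (i : V) (hi : G.dist i r = d) : (Function.update g r r)^[d] i = r := by
    induction d generalizing i with
    | zero => exact hG.dist_eq_zero_iff.1 hi
    | succ d ih =>
      have hir : i ≠ r := by rintro rfl; simp at hi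
      rw [Function.iterate_succ_apply]
      apply ih
      rw [hg_of_ne hir]
      have := hdist i hir
      omega
  have hf : IsParentFun r (Function.update g r r) :=
    ⟨Function.update_self .., fun i => ⟨_, hiter _ i rfl⟩⟩
  refine ⟨_, hf, ?_⟩
  rw [← SimpleGraph.edgeSet_subset_edgeSet, hf.edgeSet_parentGraph]
  rintro _ ⟨i, hi, rfl⟩
  simpa only [hg_of_ne hi, SimpleGraph.mem_edgeSet] using hadj i hi

lemma exists_parentGraph_eq [Finite V] {T : SimpleGraph V} (hT : T.IsTree) (r : V) :
    ∃ f, IsParentFun r f ∧ parentGraph f = T := by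
  obtain ⟨f, hf, hle⟩ := exists_isParentFun_parentGraph_le hT.connected r
  have hmin := SimpleGraph.isTree_iff_minimal_connected.1 hT
  exact ⟨f, hf, hmin.eq_of_le hf.isTree_parentGraph.connected hle⟩

open scoped Classical in
/-- The spanning trees of the complete graph on `V`, as a finset of graphs on `V`. -/
noncomputable def spanningTrees (V : Type*) [Fintype V] : Finset (SimpleGraph V) :=
  {T | T.IsTree}

lemma mem_spanningTrees [Fintype V] {T : SimpleGraph V} : T ∈ spanningTrees V ↔ T.IsTree := by
  simp [spanningTrees]

open scoped Classical in
lemma sum_spanningTrees [Fintype V] [DecidableEq V] {M : Type*} [AddCommMonoid M] (r : V)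
    (F : SimpleGraph V → M) :
    ∑ T ∈ spanningTrees V, F T = ∑ f : V → V with IsParentFun r f, F (parentGraph f) := by
  symm
  refine Finset.sum_bij (fun f _ => parentGraph f) ?_ ?_ ?_ fun _ _ => rfl
  · intro f hf
    exact mem_spanningTrees.2 (mem_filter_univ f |>.1 hf).isTree_parentGraph
  · intro f hf g hg
    exact (mem_filter_univ f |>.1 hf).parentGraph_injective (mem_filter_univ g |>.1 hg)
  · intro T hT
    obtain ⟨f, hf, hfT⟩ := exists_parentGraph_eq (mem_spanningTrees.1 hT) r
    exact ⟨f, (mem_filter_univ f).2 hf, hfT⟩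

end ParentFunctions

section MatrixTree

open Matrix

variable {V R : Type*} [Fintype V] [DecidableEq V] [CommRing R]

lemma det_eq_sum_of_row_eq {M : Matrix V V R} {c : V → V → R} {e : V → V → V → R}
    (hM : ∀ i, M i = ∑ k, c i k • e i k) :
    M.det = ∑ f : V → V, (∏ i, c i (f i)) * (of fun i => e i (f i)).det := by
  refine (congrArg Matrix.det (funext hM)).trans ?_
  refine ((detRowAlternating (n := V) (R := R)).toMultilinearMap.map_sum _).trans ?_
  exact Finset.sum_congr rfl fun f _ => MultilinearMap.map_smul_univ _ _ _

variable (R) in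
/-- The reduced incidence matrix of the functional digraph of `f`: rows `e_i - e_{f i}`, except
that the row of the root is `e_r`. -/
def parentMatrix (r : V) (f : V → V) : Matrix V V R :=
  of fun i => if i = r then Pi.single r 1 else Pi.single i 1 - Pi.single (f i) 1

lemma IsParentFun.det_parentMatrix {r : V} {f : V → V} (hf : IsParentFun r f) :
    (parentMatrix R r f).det = 1 := by
  rw [det_eq_prod_diag_of_rank fun i => Nat.find (hf.exists_iterate_eq i)]
  · refine Finset.prod_eq_one fun i _ => ?_
    by_cases hi : i = r
    · simp [parentMatrix, hi]
    · simp [parentMatrix, hi, (hf.apply_ne hi).symm]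
  · intro i j hij hle
    by_cases hi : i = r
    · simp [parentMatrix, hi, hi ▸ hij.symm]
    · suffices j ≠ f i by simp [parentMatrix, hi, hij.symm, this]
      rintro rfl
      have hdepth : Nat.find (hf.exists_iterate_eq i) =
          Nat.find (hf.exists_iterate_eq (f i)) + 1 := Nat.find_comp_succ _ _ hi
      omega

open scoped Classical in
lemma det_parentMatrix_eq_zero {r : V} {f : V → V} (hr : f r = r) (hf : ¬ IsParentFun r f) :
    (parentMatrix R r f).det = 0 := by
  obtain ⟨i, hi⟩ : ∃ i, ¬ ∃ k, f^[k] i = r := by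
    by_contra! h
    exact hf ⟨hr, h⟩
  -- The indicator of the vertices never reaching `r` is constant along `f` and vanishes at `r`.
  refine det_eq_zero_of_mulVec_eq_zero (v := fun j => if ∃ k, f^[k] j = r then 0 else 1) (i := i)
    (if_neg hi) (funext fun j => ?_)
  have hreach_apply : (∃ k, f^[k] (f j) = r) ↔ ∃ k, f^[k] j = r :=
    ⟨fun ⟨k, hk⟩ => ⟨k + 1, hk⟩, fun ⟨k, hk⟩ =>
      ⟨k, by rw [← Function.iterate_succ_apply, Function.iterate_succ_apply', hk, hr]⟩⟩
  by_cases hj : j = r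
  · simp [parentMatrix, mulVec, hj, show ∃ k, f^[k] r = r from ⟨0, rfl⟩]
  · have hrow : parentMatrix R r f j = Pi.single j 1 - Pi.single (f j) 1 := if_neg hj
    rw [mulVec, hrow, sub_dotProduct, single_one_dotProduct, single_one_dotProduct]
    simp only [hreach_apply, sub_self, Pi.zero_apply]

open scoped Classical in
theorem det_weightedLapMatrix_updateRow_single (w : V → V → R) (r : V) :
    ((weightedLapMatrix w).updateRow r (Pi.single r 1)).det =
      ∑ f : V → V with IsParentFun r f, ∏ i ∈ univ.erase r, w i (f i) := by
  have hrows (i : V) : (weightedLapMatrix w).updateRow r (Pi.single r 1) i =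
      ∑ k, Function.update w r (Pi.single r 1) i k •
        if i = r then Pi.single r 1 else Pi.single i 1 - Pi.single k 1 := by
    by_cases hi : i = r
    · subst hi
      simp [← Finset.sum_smul]
    · simp [hi, weightedLapMatrix_row]
  rw [det_eq_sum_of_row_eq hrows, Finset.sum_filter]
  refine Finset.sum_congr rfl fun f _ => ?_
  change _ * (parentMatrix R r f).det = _
  have hprod : ∏ i, Function.update w r (Pi.single r 1) i (f i) =
      (Pi.single r 1 : V → R) (f r) * ∏ i ∈ univ.erase r, w i (f i) := by
    rw [← Finset.mul_prod_erase univ _ (mem_univ r), Function.update_self]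
    congr 1
    exact Finset.prod_congr rfl fun i hi => by rw [Function.update_of_ne (ne_of_mem_erase hi)]
  rw [hprod]
  split_ifs with hf
  · rw [hf.det_parentMatrix, hf.root, Pi.single_eq_same, one_mul, mul_one]
  · by_cases hr : f r = r
    · rw [det_parentMatrix_eq_zero hr hf, mul_zero]
    · rw [Pi.single_eq_of_ne hr, zero_mul, zero_mul]

variable (G : SimpleGraph V) [DecidableRel G.Adj]

lemma weightedLapMatrix_ite_add_one (x : R) :
    weightedLapMatrix (fun i j => if G.Adj i j then x else 1) + of (fun _ _ => 1) =
      (Fintype.card V : R) • 1 + (x - 1) • G.lapMatrix R := by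
  have hrow (i : V) : ∑ j, (if G.Adj i j then x else 1) =
      Fintype.card V + (x - 1) * G.degree i := by
    have (j : V) : (if G.Adj i j then x else 1) = 1 + (x - 1) * if G.Adj i j then 1 else 0 := by
      split_ifs <;> ring
    rw [Finset.sum_congr rfl fun j _ => this j, Finset.sum_add_distrib, ← Finset.mul_sum,
      ← G.degree_eq_sum_if_adj]
    simp
  ext i j
  by_cases hij : i = j
  · subst hij
    simp [weightedLapMatrix, SimpleGraph.lapMatrix, SimpleGraph.degMatrix, hrow]
  · by_cases hG : G.Adj i j <;>
      simp [weightedLapMatrix, SimpleGraph.lapMatrix, SimpleGraph.degMatrix, hij, hG,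
        neg_add_eq_sub]

theorem card_sq_mul_sum_pow_numCommonEdges [Nonempty V] (x : R) :
    (Fintype.card V : R) ^ 2 * ∑ T ∈ spanningTrees V, x ^ numCommonEdges T G =
      ((Fintype.card V : R) • (1 : Matrix V V R) + (x - 1) • G.lapMatrix R).det := by
  classical
  obtain ⟨r⟩ := ‹Nonempty V›
  set w : V → V → R := fun i j => if G.Adj i j then x else 1 with hw
  have hcol := one_vecMul_weightedLapMatrix (w := w) fun i j => by simp only [hw, G.adj_comm]
  rw [← weightedLapMatrix_ite_add_one, det_add_one_eq (weightedLapMatrix_mulVec_one w) hcol r,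
    det_weightedLapMatrix_updateRow_single, sum_spanningTrees r]
  congr 1
  refine Finset.sum_congr rfl fun f hf => ?_
  rw [((mem_filter_univ f).1 hf).numCommonEdges_parentGraph, hw, Finset.prod_ite]
  simp

end MatrixTree

section Cayley

open Matrix

variable (V : Type*) [Fintype V] [Nonempty V]

theorem card_spanningTrees : #(spanningTrees V) = Fintype.card V ^ (Fintype.card V - 2) := by
  classical
  have h := card_sq_mul_sum_pow_numCommonEdges (⊥ : SimpleGraph V) (1 : ℤ)
  simp only [one_pow, sum_const, nsmul_eq_mul, mul_one, sub_self, zero_smul, add_zero, det_smul,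
    det_one] at h
  norm_cast at h
  have hpos : 0 < Fintype.card V := Fintype.card_pos
  rcases (Nat.succ_le_of_lt hpos).eq_or_lt with h1 | h1
  · simpa [← h1] using h
  · refine Nat.eq_of_mul_eq_mul_left (pow_pos hpos 2) ?_
    rw [h, ← pow_add, Nat.add_sub_cancel' h1]

lemma card_spanningTrees_pos : 0 < #(spanningTrees V) := by
  rw [card_spanningTrees]
  exact pow_pos Fintype.card_pos _

end Cayley

section Spectral

open Matrix

variable {V 𝕜 : Type*} [Fintype V] [DecidableEq V] [RCLike 𝕜]

lemma det_conjStarAlgAut (U : unitaryGroup V 𝕜) (M : Matrix V V 𝕜) :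
    (Unitary.conjStarAlgAut 𝕜 _ U M).det = M.det := by
  rw [Unitary.conjStarAlgAut_apply, det_mul_comm, ← mul_assoc, Unitary.coe_star_mul_self, one_mul]

lemma trace_conjStarAlgAut (U : unitaryGroup V 𝕜) (M : Matrix V V 𝕜) :
    (Unitary.conjStarAlgAut 𝕜 _ U M).trace = M.trace := by
  rw [Unitary.conjStarAlgAut_apply, trace_mul_comm, ← mul_assoc, Unitary.coe_star_mul_self,
    one_mul]

lemma det_smul_one_add_smul_of_isHermitian {A : Matrix V V 𝕜} (hA : A.IsHermitian) (a y : 𝕜) :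
    (a • (1 : Matrix V V 𝕜) + y • A).det = ∏ i, (a + y * hA.eigenvalues i) := by
  have hdiag : a • (1 : Matrix V V 𝕜) + y • diagonal (RCLike.ofReal ∘ hA.eigenvalues) =
      diagonal fun i => a + y * hA.eigenvalues i := by
    rw [smul_one_eq_diagonal, ← diagonal_smul, diagonal_add]
    rfl
  conv_lhs => rw [hA.spectral_theorem]
  rw [← map_one (Unitary.conjStarAlgAut 𝕜 _ hA.eigenvectorUnitary), ← map_smul, ← map_smul,
    ← map_add, det_conjStarAlgAut, hdiag, det_diagonal]

lemma trace_mul_self_of_isHermitian {A : Matrix V V 𝕜} (hA : A.IsHermitian) :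
    (A * A).trace = ∑ i, (hA.eigenvalues i : 𝕜) ^ 2 := by
  conv_lhs => rw [hA.spectral_theorem]
  rw [← map_mul, trace_conjStarAlgAut, diagonal_mul_diagonal, trace_diagonal]
  simp only [Function.comp_apply, sq]

variable {R : Type*} [CommRing R] (G : SimpleGraph V) [DecidableRel G.Adj]

lemma trace_lapMatrix : (G.lapMatrix R).trace = ∑ v, (G.degree v : R) := by
  simp [Matrix.trace, SimpleGraph.lapMatrix, SimpleGraph.degMatrix]

lemma trace_lapMatrix_mul_self :
    (G.lapMatrix R * G.lapMatrix R).trace = ∑ v, ((G.degree v : R) ^ 2 + G.degree v) := by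
  simp only [Matrix.trace, diag_apply, mul_apply]
  refine Finset.sum_congr rfl fun v _ => ?_
  have hentry (j : V) : G.lapMatrix R v j * G.lapMatrix R j v =
      (if v = j then (G.degree v : R) ^ 2 else 0) + if G.Adj v j then 1 else 0 := by
    rw [(G.isSymm_lapMatrix R).apply v j, SimpleGraph.lapMatrix, SimpleGraph.degMatrix]
    by_cases h : v = j
    · subst h
      simp [sq]
    · by_cases hG : G.Adj v j <;> simp [h, hG]
  rw [Finset.sum_congr rfl fun j _ => hentry j, Finset.sum_add_distrib, ← G.degree_eq_sum_if_adj]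
  simp

end Spectral

section OverlapProb

open Polynomial

/-- The probability generating function of a Bernoulli variable of parameter `p`. -/
noncomputable def bernoulliPGF (p : ℝ) : ℝ[X] := C (1 - p) + C p * X

lemma eval_bernoulliPGF (p x : ℝ) : (bernoulliPGF p).eval x = 1 - p + p * x := by
  simp [bernoulliPGF]

variable {V : Type*} [Fintype V] [DecidableEq V] (G : SimpleGraph V) [DecidableRel G.Adj]

/-- The parameters of the independent Bernoulli variables whose sum has the law of the number of
edges that a uniform spanning tree shares with `G`: the Laplacian eigenvalues of `G`, divided by
the number of vertices. -/
noncomputable def overlapProb (i : V) : ℝ :=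
  (G.isHermitian_lapMatrix ℝ).eigenvalues i / Fintype.card V

theorem sum_X_pow_numCommonEdges [Nonempty V] :
    ∑ T ∈ spanningTrees V, (X : ℝ[X]) ^ numCommonEdges T G =
      C (#(spanningTrees V) : ℝ) * ∏ i, bernoulliPGF (overlapProb G i) := by
  have hN : (Fintype.card V : ℝ) ≠ 0 := Nat.cast_ne_zero.2 Fintype.card_ne_zero
  have heval (x : ℝ) : (Fintype.card V : ℝ) ^ 2 * ∑ T ∈ spanningTrees V, x ^ numCommonEdges T G =
      Fintype.card V ^ Fintype.card V * ∏ i, (bernoulliPGF (overlapProb G i)).eval x := by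
    have hpow : (Fintype.card V : ℝ) ^ Fintype.card V = ∏ _i : V, (Fintype.card V : ℝ) := by
      rw [Finset.prod_const, Finset.card_univ]
    rw [card_sq_mul_sum_pow_numCommonEdges, hpow,
      det_smul_one_add_smul_of_isHermitian (G.isHermitian_lapMatrix ℝ),
      ← Finset.prod_mul_distrib]
    refine Finset.prod_congr rfl fun i _ => ?_
    rw [eval_bernoulliPGF, overlapProb, RCLike.ofReal_real_eq_id, id]
    field_simp
    ring
  have hcard : (Fintype.card V : ℝ) ^ 2 * #(spanningTrees V) =
      Fintype.card V ^ Fintype.card V := by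
    simpa [eval_bernoulliPGF] using heval 1
  refine Polynomial.funext fun x => mul_left_cancel₀ (pow_ne_zero 2 hN) ?_
  simpa [eval_finsetSum, eval_prod, ← mul_assoc, hcard] using heval x

lemma overlapProb_mem_Icc [Nonempty V] (i : V) : overlapProb G i ∈ Set.Icc 0 1 := by
  set q := overlapProb G i with hq
  by_contra hmem
  have hq0 : q ≠ 0 := by
    intro h0
    simp [h0] at hmem
  -- Otherwise `(q - 1) / q` would be a positive root of a nonzero polynomial with nonnegative
  -- coefficients.
  have hpos : 0 < (q - 1) / q := by
    rcases lt_or_ge q 0 with hneg | hnonneg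
    · exact div_pos_of_neg_of_neg (by linarith) hneg
    · have h1 : 1 < q := by
        by_contra! hle
        exact hmem ⟨hnonneg, hle⟩
      exact div_pos (by linarith) (by linarith)
  have hroot : ∏ j, (bernoulliPGF (overlapProb G j)).eval ((q - 1) / q) = 0 := by
    refine Finset.prod_eq_zero (mem_univ i) ?_
    rw [eval_bernoulliPGF, ← hq]
    field_simp
    ring
  have hsum : ∑ T ∈ spanningTrees V, ((q - 1) / q) ^ numCommonEdges T G = 0 := by
    simpa [eval_finsetSum, eval_prod, hroot] using
      congrArg (Polynomial.eval ((q - 1) / q)) (sum_X_pow_numCommonEdges G)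
  exact (Finset.sum_pos (fun T _ => pow_pos hpos _)
    (Finset.card_pos.1 (card_spanningTrees_pos V))).ne' hsum

lemma sum_overlapProb :
    ∑ i, overlapProb G i = (∑ v, (G.degree v : ℝ)) / Fintype.card V := by
  have h := (G.isHermitian_lapMatrix ℝ).trace_eq_sum_eigenvalues
  rw [trace_lapMatrix] at h
  simp only [overlapProb, h, ← Finset.sum_div, RCLike.ofReal_real_eq_id, id]

lemma sum_overlapProb_sq : ∑ i, overlapProb G i ^ 2 =
    (∑ v, ((G.degree v : ℝ) ^ 2 + G.degree v)) / (Fintype.card V : ℝ) ^ 2 := by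
  rw [← trace_lapMatrix_mul_self, trace_mul_self_of_isHermitian (G.isHermitian_lapMatrix ℝ)]
  simp only [overlapProb, div_pow, ← Finset.sum_div, RCLike.ofReal_real_eq_id, id]

end OverlapProb

section L1Norm

open PowerSeries
open scoped ENNReal

variable {𝕜 ι : Type*} [NormedField 𝕜]

/-- The `ℓ¹` norm of the coefficient sequence of a power series. It is extended-valued, so that the
Banach algebra inequalities hold without summability assumptions. For generating functions of
probability laws, half the norm of the difference is the total variation distance. -/
noncomputable def l1Norm (f : 𝕜⟦X⟧) : ℝ≥0∞ := ∑' m, ‖coeff m f‖ₑ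

lemma l1Norm_add_le (f g : 𝕜⟦X⟧) : l1Norm (f + g) ≤ l1Norm f + l1Norm g := by
  rw [l1Norm, l1Norm, l1Norm, ← ENNReal.tsum_add]
  exact ENNReal.tsum_le_tsum fun m => by simpa only [map_add] using enorm_add_le _ _

lemma l1Norm_sum_le (s : Finset ι) (f : ι → 𝕜⟦X⟧) :
    l1Norm (∑ i ∈ s, f i) ≤ ∑ i ∈ s, l1Norm (f i) :=
  Finset.le_sum_of_subadditive _ (by simp [l1Norm]) l1Norm_add_le _ _

lemma l1Norm_smul (c : 𝕜) (f : 𝕜⟦X⟧) : l1Norm (c • f) = ‖c‖ₑ * l1Norm f := by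
  simp only [l1Norm, coeff_smul, smul_eq_mul, enorm_mul, ENNReal.tsum_mul_left]

lemma l1Norm_mul_le (f g : 𝕜⟦X⟧) : l1Norm (f * g) ≤ l1Norm f * l1Norm g := by
  calc l1Norm (f * g)
      ≤ ∑' m, ∑ k ∈ antidiagonal m, ‖coeff k.1 f‖ₑ * ‖coeff k.2 g‖ₑ := by
        refine ENNReal.tsum_le_tsum fun m => ?_
        simpa only [coeff_mul, enorm_mul] using
          enorm_sum_le (antidiagonal m) fun k => coeff k.1 f * coeff k.2 g
    _ = ∑' k : ℕ × ℕ, ‖coeff k.1 f‖ₑ * ‖coeff k.2 g‖ₑ := by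
        rw [← HasAntidiagonal.sigmaAntidiagonalEquivProd.tsum_eq, ENNReal.tsum_sigma']
        exact tsum_congr fun m => (Finset.tsum_subtype (antidiagonal m)
          fun k => ‖coeff k.1 f‖ₑ * ‖coeff k.2 g‖ₑ).symm
    _ = l1Norm f * l1Norm g := by
        rw [ENNReal.tsum_prod (f := fun i j => ‖coeff i f‖ₑ * ‖coeff j g‖ₑ)]
        simp only [ENNReal.tsum_mul_left, ENNReal.tsum_mul_right, l1Norm]

lemma l1Norm_one : l1Norm (1 : 𝕜⟦X⟧) = 1 := by
  rw [l1Norm, tsum_eq_single 0 fun m hm => by simp [coeff_one, hm]]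
  simp

lemma l1Norm_prod_le_one {s : Finset ι} {f : ι → 𝕜⟦X⟧} (hf : ∀ i ∈ s, l1Norm (f i) ≤ 1) :
    l1Norm (∏ i ∈ s, f i) ≤ 1 :=
  Finset.prod_induction _ (fun f => l1Norm f ≤ 1)
    (fun _ _ hf hg => (l1Norm_mul_le _ _).trans (mul_le_one' hf hg)) l1Norm_one.le hf

lemma l1Norm_prod_sub_prod_le (s : Finset ι) {f g : ι → 𝕜⟦X⟧} (hf : ∀ i ∈ s, l1Norm (f i) ≤ 1)
    (hg : ∀ i ∈ s, l1Norm (g i) ≤ 1) :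
    l1Norm (∏ i ∈ s, f i - ∏ i ∈ s, g i) ≤ ∑ i ∈ s, l1Norm (f i - g i) := by
  classical
  induction s using Finset.induction_on with
  | empty => simp [l1Norm]
  | insert a s ha ih =>
    simp only [forall_mem_insert] at hf hg
    rw [prod_insert ha, prod_insert ha, sum_insert ha]
    calc l1Norm (f a * ∏ i ∈ s, f i - g a * ∏ i ∈ s, g i)
        = l1Norm ((f a - g a) * ∏ i ∈ s, g i + f a * (∏ i ∈ s, f i - ∏ i ∈ s, g i)) := by
          congr 1
          ring
      _ ≤ l1Norm (f a - g a) * 1 + 1 * ∑ i ∈ s, l1Norm (f i - g i) := by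
          refine (l1Norm_add_le _ _).trans (add_le_add ?_ ?_)
          · exact (l1Norm_mul_le _ _).trans (mul_le_mul_right (l1Norm_prod_le_one hg.2) _)
          · exact (l1Norm_mul_le _ _).trans (mul_le_mul' hf.1 (ih hf.2 hg.2))
      _ = _ := by rw [mul_one, one_mul]

lemma l1Norm_eq_ofReal {f : 𝕜⟦X⟧} {a : ℝ} (h : HasSum (fun m => ‖coeff m f‖) a) :
    l1Norm f = ENNReal.ofReal a := by
  rw [← h.tsum_eq, ENNReal.ofReal_tsum_of_nonneg (fun _ => norm_nonneg _) h.summable]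
  simp only [ofReal_norm, l1Norm]

lemma l1Norm_eq_of_coeff_nonneg {f : ℝ⟦X⟧} {a : ℝ} (hf : ∀ m, 0 ≤ coeff m f)
    (h : HasSum (fun m => coeff m f) a) : l1Norm f = ENNReal.ofReal a :=
  l1Norm_eq_ofReal <| by simpa only [Real.norm_of_nonneg (hf _)] using h

lemma l1Norm_eq_of_hasSum_zero {f : ℝ⟦X⟧} {k : ℕ} (hf : ∀ m ≠ k, coeff m f ≤ 0)
    (h : HasSum (fun m => coeff m f) 0) : l1Norm f = ENNReal.ofReal (2 * coeff k f) := by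
  have hsingle := hasSum_ite_eq k (coeff k f)
  have hk : 0 ≤ coeff k f := by
    refine hasSum_le (fun m => ?_) h hsingle
    split_ifs with hm
    · rw [hm]
    · exact hf m hm
  have hnorm (m : ℕ) :
      ‖coeff m f‖ = 2 * (if m = k then coeff k f else 0) - coeff m f := by
    split_ifs with hm
    · rw [hm, Real.norm_of_nonneg hk]
      ring
    · rw [Real.norm_of_nonpos (hf m hm)]
      ring
  refine l1Norm_eq_ofReal ?_
  simpa only [hnorm, sub_zero] using (hsingle.mul_left 2).sub h

end L1Norm

section LeCam

open PowerSeries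

variable {ι : Type*}

lemma hasSum_coeff_eval_one (P : Polynomial ℝ) :
    HasSum (fun m => coeff m (P : ℝ⟦X⟧)) (P.eval 1) := by
  rw [P.eval_eq_sum, Polynomial.sum]
  simp only [one_pow, mul_one, Polynomial.coeff_coe]
  exact hasSum_sum_of_ne_finset_zero fun m hm => Polynomial.notMem_support_iff.1 hm

lemma l1Norm_bernoulliPGF {p : ℝ} (hp : p ∈ Set.Icc 0 1) :
    l1Norm (bernoulliPGF p : ℝ⟦X⟧) = 1 := by
  have hcoeff (m : ℕ) : 0 ≤ coeff m (bernoulliPGF p : ℝ⟦X⟧) := by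
    rcases m with _ | _ | m <;>
      simp [bernoulliPGF, hp.1, hp.2]
  rw [l1Norm_eq_of_coeff_nonneg hcoeff (hasSum_coeff_eval_one _), eval_bernoulliPGF]
  simp

/-- The probability generating function of the Poisson law of mean `μ`, as a power series. -/
noncomputable def poissonPGF (μ : ℝ) : ℝ⟦X⟧ :=
  PowerSeries.mk fun m => Real.exp (-μ) * μ ^ m / m.factorial

lemma coeff_poissonPGF (μ : ℝ) (m : ℕ) :
    coeff m (poissonPGF μ) = Real.exp (-μ) * μ ^ m / m.factorial :=
  coeff_mk _ _

lemma coeff_poissonPGF_nonneg {μ : ℝ} (hμ : 0 ≤ μ) (m : ℕ) : 0 ≤ coeff m (poissonPGF μ) := by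
  rw [coeff_poissonPGF]
  positivity

lemma hasSum_coeff_poissonPGF {μ : ℝ} (hμ : 0 ≤ μ) :
    HasSum (fun m => coeff m (poissonPGF μ)) 1 := by
  simp only [coeff_poissonPGF]
  exact ProbabilityTheory.hasSum_one_poissonMeasure ⟨μ, hμ⟩

lemma l1Norm_poissonPGF {μ : ℝ} (hμ : 0 ≤ μ) : l1Norm (poissonPGF μ) = 1 := by
  rw [l1Norm_eq_of_coeff_nonneg (coeff_poissonPGF_nonneg hμ) (hasSum_coeff_poissonPGF hμ),
    ENNReal.ofReal_one]

lemma poissonPGF_eq_smul_rescale_exp (μ : ℝ) :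
    poissonPGF μ = Real.exp (-μ) • rescale μ (PowerSeries.exp ℝ) := by
  ext m
  simp [coeff_poissonPGF, coeff_exp, div_eq_mul_inv, mul_assoc]

lemma poissonPGF_zero : poissonPGF 0 = 1 := by
  simp [poissonPGF_eq_smul_rescale_exp]

lemma poissonPGF_add (μ ν : ℝ) : poissonPGF (μ + ν) = poissonPGF μ * poissonPGF ν := by
  simp only [poissonPGF_eq_smul_rescale_exp, smul_mul_smul_comm, exp_mul_exp_eq_exp_add,
    neg_add, Real.exp_add]

lemma poissonPGF_sum (s : Finset ι) (μ : ι → ℝ) :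
    poissonPGF (∑ i ∈ s, μ i) = ∏ i ∈ s, poissonPGF (μ i) := by
  classical
  induction s using Finset.induction_on with
  | empty => simp [poissonPGF_zero]
  | insert a s ha ih => rw [sum_insert ha, prod_insert ha, poissonPGF_add, ih]

lemma l1Norm_bernoulliPGF_sub_poissonPGF_le {p : ℝ} (hp : 0 ≤ p) :
    l1Norm ((bernoulliPGF p : ℝ⟦X⟧) - poissonPGF p) ≤ ENNReal.ofReal (2 * p ^ 2) := by
  have hexp : 1 - p ≤ Real.exp (-p) := Real.one_sub_le_exp_neg p
  have hcoeff (m : ℕ) (hm : m ≠ 1) : coeff m ((bernoulliPGF p : ℝ⟦X⟧) - poissonPGF p) ≤ 0 := by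
    rw [map_sub, sub_nonpos]
    rcases m with _ | _ | m
    · simpa [bernoulliPGF, coeff_poissonPGF] using hexp
    · exact absurd rfl hm
    · refine le_of_eq_of_le ?_ (coeff_poissonPGF_nonneg hp _)
      simp [bernoulliPGF]
  have hsum := (hasSum_coeff_eval_one (bernoulliPGF p)).sub (hasSum_coeff_poissonPGF hp)
  rw [eval_bernoulliPGF, mul_one, sub_add_cancel, sub_self] at hsum
  rw [l1Norm_eq_of_hasSum_zero hcoeff (by simpa only [map_sub] using hsum)]
  refine ENNReal.ofReal_le_ofReal (mul_le_mul_of_nonneg_left ?_ zero_le_two)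
  have hcoeff_one : coeff 1 ((bernoulliPGF p : ℝ⟦X⟧) - poissonPGF p) = p - Real.exp (-p) * p := by
    simp [bernoulliPGF, coeff_poissonPGF]
  rw [hcoeff_one]
  nlinarith

lemma l1Norm_poissonPGF_sub_poissonPGF_add_le {a b : ℝ} (ha : 0 ≤ a) (hb : 0 ≤ b) :
    l1Norm (poissonPGF a - poissonPGF (a + b)) ≤ ENNReal.ofReal (2 * b) := by
  have hcoeff (m : ℕ) (hm : m ≠ 0) : coeff m (1 - poissonPGF b) ≤ 0 := by
    simpa [coeff_one, hm] using coeff_poissonPGF_nonneg hb m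
  have hsum : HasSum (fun m => coeff m (1 - poissonPGF b)) 0 := by
    simpa using (hasSum_coeff_eval_one 1).sub (hasSum_coeff_poissonPGF hb)
  have hcoeff_zero : coeff 0 (1 - poissonPGF b) = 1 - Real.exp (-b) := by
    simp [-coeff_zero_eq_constantCoeff, coeff_poissonPGF]
  calc l1Norm (poissonPGF a - poissonPGF (a + b))
      = l1Norm (poissonPGF a * (1 - poissonPGF b)) := by rw [poissonPGF_add, mul_sub, mul_one]
    _ ≤ l1Norm (poissonPGF a) * l1Norm (1 - poissonPGF b) := l1Norm_mul_le _ _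
    _ = ENNReal.ofReal (2 * (1 - Real.exp (-b))) := by
      rw [l1Norm_poissonPGF ha, one_mul, l1Norm_eq_of_hasSum_zero hcoeff hsum, hcoeff_zero]
    _ ≤ ENNReal.ofReal (2 * b) := by
      have := Real.one_sub_le_exp_neg b
      exact ENNReal.ofReal_le_ofReal (by linarith)

theorem l1Norm_prod_bernoulliPGF_sub_poissonPGF_le (s : Finset ι) {p : ι → ℝ}
    (hp : ∀ i ∈ s, p i ∈ Set.Icc 0 1) :
    l1Norm (((∏ i ∈ s, bernoulliPGF (p i) : Polynomial ℝ) : ℝ⟦X⟧) - poissonPGF (∑ i ∈ s, p i)) ≤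
      ENNReal.ofReal (2 * ∑ i ∈ s, p i ^ 2) := by
  rw [← Polynomial.coeToPowerSeries.ringHom_apply, map_prod, poissonPGF_sum]
  simp only [Polynomial.coeToPowerSeries.ringHom_apply]
  calc _ ≤ ∑ i ∈ s, l1Norm ((bernoulliPGF (p i) : ℝ⟦X⟧) - poissonPGF (p i)) :=
        l1Norm_prod_sub_prod_le s (fun i hi => (l1Norm_bernoulliPGF (hp i hi)).le)
          fun i hi => (l1Norm_poissonPGF (hp i hi).1).le
    _ ≤ ∑ i ∈ s, ENNReal.ofReal (2 * p i ^ 2) :=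
        sum_le_sum fun i hi => l1Norm_bernoulliPGF_sub_poissonPGF_le (hp i hi).1
    _ = ENNReal.ofReal (2 * ∑ i ∈ s, p i ^ 2) := by
        rw [mul_sum, ENNReal.ofReal_sum_of_nonneg fun _ _ => by positivity]

end LeCam

section Degrees

open Polynomial

lemma eval_one_prod_bernoulliPGF {ι : Type*} (s : Finset ι) (p : ι → ℝ) :
    (∏ i ∈ s, bernoulliPGF (p i)).eval 1 = 1 := by
  simp [eval_prod, eval_bernoulliPGF]

lemma derivative_bernoulliPGF (p : ℝ) : derivative (bernoulliPGF p) = C p := by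
  simp [bernoulliPGF]

lemma eval_one_derivative_prod_bernoulliPGF {ι : Type*} (s : Finset ι) (p : ι → ℝ) :
    (derivative (∏ i ∈ s, bernoulliPGF (p i))).eval 1 = ∑ i ∈ s, p i := by
  classical
  induction s using Finset.induction_on with
  | empty => simp
  | insert a s ha ih =>
    rw [prod_insert ha, sum_insert ha, derivative_mul, eval_add, eval_mul, eval_mul, ih,
      eval_one_prod_bernoulliPGF, derivative_bernoulliPGF, eval_C, eval_bernoulliPGF]
    ring

lemma eval_one_iterate_derivative_two_prod_bernoulliPGF {ι : Type*} (s : Finset ι) (p : ι → ℝ) :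
    (derivative^[2] (∏ i ∈ s, bernoulliPGF (p i))).eval 1 =
      (∑ i ∈ s, p i) ^ 2 - ∑ i ∈ s, p i ^ 2 := by
  classical
  induction s using Finset.induction_on with
  | empty => simp
  | insert a s ha ih =>
    simp only [Function.iterate_succ_apply, Function.iterate_zero_apply] at ih ⊢
    simp only [prod_insert ha, sum_insert ha, derivative_mul, derivative_bernoulliPGF,
      derivative_add, derivative_C, eval_add, eval_mul, eval_C, eval_zero, ih,
      eval_one_derivative_prod_bernoulliPGF, eval_bernoulliPGF]
    ring

variable {V : Type*} [Fintype V]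

theorem sum_numCommonEdges_mul_sub_one [DecidableEq V] [Nonempty V] (G : SimpleGraph V)
    [DecidableRel G.Adj] :
    ∑ T ∈ spanningTrees V, (numCommonEdges T G : ℝ) * (numCommonEdges T G - 1) =
      #(spanningTrees V) * ((∑ i, overlapProb G i) ^ 2 - ∑ i, overlapProb G i ^ 2) := by
  have h := congrArg (fun P : ℝ[X] => (derivative^[2] P).eval 1) (sum_X_pow_numCommonEdges G)
  simp only [iterate_derivative_sum, iterate_derivative_C_mul, eval_finsetSum, eval_C_mul,
    eval_one_iterate_derivative_two_prod_bernoulliPGF, iterate_derivative_X_pow_eq_natCast_mul]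
    at h
  rw [← h]
  refine Finset.sum_congr rfl fun T _ => ?_
  rw [eval_mul, eval_natCast, Nat.cast_descFactorial_two, eval_X_pow, one_pow, mul_one]

lemma numCommonEdges_starGraph (G : SimpleGraph V) [DecidableRel G.Adj] (v : V) :
    numCommonEdges G (.starGraph v) = G.degree v := by
  classical
  have hedges : (G ⊓ .starGraph v).edgeSet = G.incidenceSet v := by
    ext e
    induction e using Sym2.ind with | _ a b
    simp only [SimpleGraph.mem_edgeSet, SimpleGraph.inf_adj, SimpleGraph.starGraph_adj,
      SimpleGraph.mk'_mem_incidenceSet_iff]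
    refine and_congr_right fun hab => ?_
    simp only [hab.ne, ne_eq, not_false_eq_true, true_and, eq_comm]
  rw [numCommonEdges, hedges, ← G.card_incidenceSet_eq_degree v, Set.ncard_eq_toFinset_card']
  simp

lemma sum_degree_of_isTree {T : SimpleGraph V} [DecidableRel T.Adj] (hT : T.IsTree) :
    ∑ v, (T.degree v : ℝ) = 2 * (Fintype.card V - 1) := by
  rw [← Nat.cast_sum, T.sum_degrees_eq_twice_card_edges, ← hT.card_edgeFinset]
  push_cast
  ring

lemma sum_overlapProb_of_isTree [DecidableEq V] {T : SimpleGraph V} [DecidableRel T.Adj]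
    (hT : T.IsTree) :
    ∑ i, overlapProb T i = 2 - 2 / Fintype.card V := by
  have : Nonempty V := hT.connected.nonempty
  have hN : (Fintype.card V : ℝ) ≠ 0 := Nat.cast_ne_zero.2 Fintype.card_ne_zero
  rw [sum_overlapProb, sum_degree_of_isTree hT]
  field_simp

lemma two_sub_two_div_card_mem_Icc [Nonempty V] :
    (2 - 2 / Fintype.card V : ℝ) ∈ Set.Icc 0 2 := by
  have hN : (1 : ℝ) ≤ Fintype.card V := Nat.one_le_cast.2 Fintype.card_pos
  exact ⟨sub_nonneg.2 (div_le_self zero_le_two hN), sub_le_self 2 (by positivity)⟩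

open scoped Classical in
lemma sum_degree_mul_sub_one_le [Nonempty V] (v : V) :
    ∑ T ∈ spanningTrees V, (T.degree v : ℝ) * (T.degree v - 1) ≤ 4 * #(spanningTrees V) := by
  have h := sum_numCommonEdges_mul_sub_one (SimpleGraph.starGraph v)
  rw [sum_overlapProb_of_isTree (SimpleGraph.isTree_starGraph v)] at h
  simp only [numCommonEdges_starGraph] at h
  rw [h, mul_comm]
  refine mul_le_mul_of_nonneg_right ?_ (Nat.cast_nonneg _)
  obtain ⟨h0, h2⟩ := two_sub_two_div_card_mem_Icc (V := V)
  have hsq : 0 ≤ ∑ i, overlapProb (SimpleGraph.starGraph v) i ^ 2 :=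
    Finset.sum_nonneg fun i _ => sq_nonneg _
  nlinarith

open scoped Classical in
lemma sum_sum_overlapProb_sq_le [Nonempty V] :
    ∑ T ∈ spanningTrees V, ∑ i, overlapProb T i ^ 2 ≤
      8 / Fintype.card V * #(spanningTrees V) := by
  have htree (T) (hT : T ∈ spanningTrees V) : ∑ v, ((T.degree v : ℝ) ^ 2 + T.degree v) =
      ∑ v, (T.degree v : ℝ) * (T.degree v - 1) + 4 * (Fintype.card V - 1) := by
    have hdeg := sum_degree_of_isTree (mem_spanningTrees.1 hT)
    calc ∑ v, ((T.degree v : ℝ) ^ 2 + T.degree v)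
        = ∑ v, (T.degree v : ℝ) * (T.degree v - 1) + 2 * ∑ v, (T.degree v : ℝ) := by
          rw [Finset.mul_sum, ← Finset.sum_add_distrib]
          exact Finset.sum_congr rfl fun v _ => by ring
      _ = _ := by
          rw [hdeg]
          ring
  have hfact : ∑ T ∈ spanningTrees V, ∑ v, (T.degree v : ℝ) * (T.degree v - 1) ≤
      Fintype.card V * (4 * #(spanningTrees V)) := by
    rw [Finset.sum_comm]
    simpa using Finset.sum_le_card_nsmul univ _ _ fun v _ => sum_degree_mul_sub_one_le v
  simp only [sum_overlapProb_sq, ← Finset.sum_div]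
  rw [div_le_iff₀ (by positivity), Finset.sum_congr rfl htree, Finset.sum_add_distrib,
    Finset.sum_const, nsmul_eq_mul]
  have hcancel : 8 / (Fintype.card V : ℝ) * #(spanningTrees V) * Fintype.card V ^ 2 =
      8 * Fintype.card V * #(spanningTrees V) := by
    field_simp
  rw [hcancel]
  nlinarith

end Degrees

section PoissonApproximation

open PowerSeries

variable {V : Type*} [Fintype V]

variable (V) in
/-- The probability generating function of the number of common edges of two independent uniform
spanning trees on `V`. -/
noncomputable def commonEdgesPGF : ℝ⟦X⟧ :=
  ((#(spanningTrees V) : ℝ) ^ 2)⁻¹ •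
    ∑ T ∈ spanningTrees V, ∑ S ∈ spanningTrees V, (X : ℝ⟦X⟧) ^ numCommonEdges S T

open scoped Classical in
lemma commonEdgesPGF_eq_smul_sum_prod_bernoulliPGF [Nonempty V] :
    commonEdgesPGF V = (#(spanningTrees V) : ℝ)⁻¹ • ∑ T ∈ spanningTrees V,
      ((∏ i, bernoulliPGF (overlapProb T i) : Polynomial ℝ) : ℝ⟦X⟧) := by
  have hτ : (#(spanningTrees V) : ℝ) ≠ 0 := Nat.cast_ne_zero.2 (card_spanningTrees_pos V).ne'
  have hsum (T : SimpleGraph V) : ∑ S ∈ spanningTrees V, (X : ℝ⟦X⟧) ^ numCommonEdges S T =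
      (#(spanningTrees V) : ℝ) •
        ((∏ i, bernoulliPGF (overlapProb T i) : Polynomial ℝ) : ℝ⟦X⟧) := by
    have h := congrArg Polynomial.coeToPowerSeries.ringHom (sum_X_pow_numCommonEdges T)
    simpa only [map_sum, map_pow, map_mul, Polynomial.coeToPowerSeries.ringHom_apply,
      Polynomial.coe_X, Polynomial.coe_C, ← smul_eq_C_mul] using h
  simp only [commonEdgesPGF, hsum, ← Finset.smul_sum, smul_smul]
  congr 1
  field_simp

open scoped Classical in
lemma l1Norm_prod_bernoulliPGF_overlapProb_sub_poissonPGF_le {T : SimpleGraph V} (hT : T.IsTree) :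
    l1Norm (((∏ i, bernoulliPGF (overlapProb T i) : Polynomial ℝ) : ℝ⟦X⟧) -
      poissonPGF (2 - 2 / Fintype.card V)) ≤ ENNReal.ofReal (2 * ∑ i, overlapProb T i ^ 2) := by
  have : Nonempty V := hT.connected.nonempty
  rw [← sum_overlapProb_of_isTree hT]
  exact l1Norm_prod_bernoulliPGF_sub_poissonPGF_le univ fun i _ => overlapProb_mem_Icc T i

theorem l1Norm_commonEdgesPGF_sub_poissonPGF_le [Nonempty V] :
    l1Norm (commonEdgesPGF V - poissonPGF (2 - 2 / Fintype.card V)) ≤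
      ENNReal.ofReal (16 / Fintype.card V) := by
  classical
  set g := poissonPGF (2 - 2 / Fintype.card V)
  have hτ : (0 : ℝ) < #(spanningTrees V) := Nat.cast_pos.2 (card_spanningTrees_pos V)
  have haverage : commonEdgesPGF V - g = (#(spanningTrees V) : ℝ)⁻¹ • ∑ T ∈ spanningTrees V,
      (((∏ i, bernoulliPGF (overlapProb T i) : Polynomial ℝ) : ℝ⟦X⟧) - g) := by
    rw [commonEdgesPGF_eq_smul_sum_prod_bernoulliPGF, Finset.sum_sub_distrib, smul_sub,
      Finset.sum_const, ← Nat.cast_smul_eq_nsmul ℝ, inv_smul_smul₀ hτ.ne']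
  calc l1Norm (commonEdgesPGF V - g)
      ≤ ENNReal.ofReal (#(spanningTrees V) : ℝ)⁻¹ *
          ∑ T ∈ spanningTrees V, ENNReal.ofReal (2 * ∑ i, overlapProb T i ^ 2) := by
        rw [haverage, l1Norm_smul, Real.enorm_of_nonneg (inv_nonneg.2 hτ.le)]
        refine mul_le_mul_right ((l1Norm_sum_le _ _).trans (Finset.sum_le_sum fun T hT => ?_)) _
        exact l1Norm_prod_bernoulliPGF_overlapProb_sub_poissonPGF_le (mem_spanningTrees.1 hT)
    _ = ENNReal.ofReal ((#(spanningTrees V) : ℝ)⁻¹ *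
          (2 * ∑ T ∈ spanningTrees V, ∑ i, overlapProb T i ^ 2)) := by
        rw [← ENNReal.ofReal_sum_of_nonneg fun _ _ => by positivity, ← Finset.mul_sum,
          ENNReal.ofReal_mul (inv_nonneg.2 hτ.le)]
    _ ≤ ENNReal.ofReal (16 / Fintype.card V) := by
        refine ENNReal.ofReal_le_ofReal ((inv_mul_le_iff₀ hτ).2 ?_)
        linear_combination 2 * sum_sum_overlapProb_sq_le (V := V)

theorem l1Norm_commonEdgesPGF_sub_poissonPGF_two_le [Nonempty V] :
    l1Norm (commonEdgesPGF V - poissonPGF 2) ≤ ENNReal.ofReal (20 / Fintype.card V) := by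
  have hshift := l1Norm_poissonPGF_sub_poissonPGF_add_le (b := 2 / Fintype.card V)
    (two_sub_two_div_card_mem_Icc (V := V)).1 (by positivity)
  rw [sub_add_cancel] at hshift
  calc l1Norm (commonEdgesPGF V - poissonPGF 2)
      ≤ l1Norm (commonEdgesPGF V - poissonPGF (2 - 2 / Fintype.card V)) +
          l1Norm (poissonPGF (2 - 2 / Fintype.card V) - poissonPGF 2) := by
        rw [← sub_add_sub_cancel]
        exact l1Norm_add_le _ _
    _ ≤ ENNReal.ofReal (16 / Fintype.card V) + ENNReal.ofReal (2 * (2 / Fintype.card V)) :=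
        add_le_add l1Norm_commonEdgesPGF_sub_poissonPGF_le hshift
    _ = ENNReal.ofReal (20 / Fintype.card V) := by
        rw [← ENNReal.ofReal_add (by positivity) (by positivity)]
        congr 1
        ring

lemma coeff_commonEdgesPGF (n : ℕ) [NeZero n] (m : ℕ) :
    coeff m (commonEdgesPGF (Fin n)) = probCommonEdgesEq n m := by
  classical
  have hcount : Nat.card {p : SimpleGraph (Fin n) × SimpleGraph (Fin n) //
      p.1.IsTree ∧ p.2.IsTree ∧ Nat.card (p.1 ⊓ p.2).edgeSet = m} =
      ∑ T ∈ spanningTrees (Fin n), #{S ∈ spanningTrees (Fin n) | numCommonEdges S T = m} := by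
    have hproduct : ({p | p.1.IsTree ∧ p.2.IsTree ∧ Nat.card (p.1 ⊓ p.2).edgeSet = m} :
        Finset (SimpleGraph (Fin n) × SimpleGraph (Fin n))) =
        {p ∈ spanningTrees (Fin n) ×ˢ spanningTrees (Fin n) | numCommonEdges p.1 p.2 = m} := by
      ext p
      rw [Finset.mem_filter_univ, Finset.mem_filter, Finset.mem_product, mem_spanningTrees,
        mem_spanningTrees, and_assoc, numCommonEdges, Nat.card_coe_set_eq]
    rw [Nat.card_eq_fintype_card, Fintype.card_subtype, hproduct, Finset.card_filter,
      Finset.sum_product_right]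
    simp only [Finset.card_filter]
  have hcoeff (k : ℕ) : coeff m ((X : ℝ⟦X⟧) ^ k) = if k = m then 1 else 0 := by
    simp only [coeff_X_pow, eq_comm]
  rw [probCommonEdgesEq, hcount, mul_comm 2, pow_mul, commonEdgesPGF, card_spanningTrees,
    Fintype.card_fin, div_eq_inv_mul]
  simp only [coeff_smul, map_sum, hcoeff, sum_boole, smul_eq_mul, Nat.cast_pow, Nat.cast_sum]

lemma tvDistPoisson_eq_l1Norm (n : ℕ) [NeZero n] (lam : ℝ) :
    tvDistPoisson n lam = 1 / 2 * (l1Norm (commonEdgesPGF (Fin n) - poissonPGF lam)).toReal := by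
  rw [l1Norm, ENNReal.tsum_toReal_eq fun _ => enorm_ne_top]
  simp only [tvDistPoisson, map_sub, coeff_commonEdgesPGF, coeff_poissonPGF, toReal_enorm,
    Real.norm_eq_abs]

lemma tvDistPoisson_le_of_l1Norm_le {n : ℕ} [NeZero n] {lam c : ℝ} (hc : 0 ≤ c)
    (h : l1Norm (commonEdgesPGF (Fin n) - poissonPGF lam) ≤ ENNReal.ofReal c) :
    tvDistPoisson n lam ≤ c / 2 := by
  rw [tvDistPoisson_eq_l1Norm, one_div, ← div_eq_inv_mul]
  exact div_le_div_of_nonneg_right (ENNReal.toReal_le_of_le_ofReal hc h) zero_le_two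

theorem tvDistPoisson_two_sub_two_div_le (n : ℕ) [NeZero n] :
    tvDistPoisson n (2 - 2 / n) ≤ 8 / n := by
  have h := l1Norm_commonEdgesPGF_sub_poissonPGF_le (V := Fin n)
  rw [Fintype.card_fin] at h
  refine (tvDistPoisson_le_of_l1Norm_le (by positivity) h).trans_eq ?_
  ring

theorem tvDistPoisson_two_le (n : ℕ) [NeZero n] : tvDistPoisson n 2 ≤ 10 / n := by
  have h := l1Norm_commonEdgesPGF_sub_poissonPGF_two_le (V := Fin n)
  rw [Fintype.card_fin] at h
  refine (tvDistPoisson_le_of_l1Norm_le (by positivity) h).trans_eq ?_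
  ring

end PoissonApproximation

end TreeOverlap

/-- For every `n ≥ 2`, the total variation distance between the law
of `Xₙ` and the Poisson distribution with mean `2 − 2/n` is at most `50/n`;
consequently, the total variation distance between the law of `Xₙ` and the Poisson
distribution with mean `2` is at most `52/n`. -/
theorem tv_distance_bound (n : ℕ) (hn : 2 ≤ n) :
    tvDistPoisson n (2 - 2 / n) ≤ 50 / n ∧ tvDistPoisson n 2 ≤ 52 / n := by
  have : NeZero n := ⟨by omega⟩
  have hmean := TreeOverlap.tvDistPoisson_two_sub_two_div_le n
  have htwo := TreeOverlap.tvDistPoisson_two_le n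
  exact ⟨hmean.trans (by gcongr; norm_num), htwo.trans (by gcongr; norm_num)⟩
end

section
/- Fix an integer k ≥ 3. Let p_n denote the probability that k independent uniformly random spanning trees of K_n have at least one common edge. Then for all n ≥ 4, C(n,2)(2/n)^k − (n(n−1)(n−2)/2)(3/n²)^k − (n(n−1)(n−2)(n−3)/8)(4/n²)^k ≤ p_n ≤ C(n,2)(2/n)^k. Consequently p_n = C(n,2)(2/n)^k − O(n^{4−2k}), and in particular p_n → 0 as n → ∞. -/
/-- `p_n`: the probability that `k` independent uniformly random spanning trees of
`K_n` have at least one common edge, i.e. the number of ordered `k`-tuples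
`(T₁, …, T_k)` of spanning trees of `K_n` with `E(T₁) ∩ ⋯ ∩ E(T_k) ≠ ∅`, divided by
the number `n^(k(n-2))` of such tuples. -/
noncomputable def probCommonEdgeExists (k n : ℕ) : ℝ :=
  (Nat.card {f : Fin k → SimpleGraph (Fin n) //
      (∀ i, (f i).IsTree) ∧ ∃ e, ∀ i, e ∈ (f i).edgeSet} : ℝ) /
    (n : ℝ) ^ (k * (n - 2))

/-!
By Bonferroni, the number of `k`-tuples of trees with a common edge lies between `S₁ - S₂` and `S₁`,
where `S₁` and `S₂` sum, over edges and over pairs of edges, the number of `k`-tuples all of whose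
trees contain these edges. These are `k`-th powers of tree counts, so everything follows from the
fact that a spanning forest of `K_n` with `c` components lies in `n^(c-2)` times the product of the
orders of its components spanning trees. Relative to `n^(n-2)`, this is `2/n` for one edge, `3/n²`
for two adjacent edges and `4/n²` for two disjoint ones.

The forest formula is proved by induction on `c`. Count the pairs of a spanning tree containing the
forest `F` and an oriented edge of this tree outside `F`: each tree accounts for `2(c-1)` pairs, and
the pairs with edge `uv` for the trees containing `F + uv`, a forest with `c-1` components. If `a_u`
denotes the order of the component of `u`, the product of the orders for `F + uv` is that for `F`
times `1/a_u + 1/a_v`, and `∑ 1/a_u = n(c-1)` over the ordered pairs `(u, v)` of vertices in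
different components.
-/

namespace CommonEdge

open Finset SimpleGraph

section Components

variable {V : Type*} {F : SimpleGraph V} {u v : V}

theorem reachable_sup_edge_iff {x y : V} :
    (F ⊔ edge u v).Reachable x y ↔
      F.Reachable x y ∨ F.Reachable x u ∧ F.Reachable v y ∨ F.Reachable x v ∧ F.Reachable u y := by
  constructor
  · rintro ⟨p⟩
    induction p with
    | nil => exact .inl .rfl
    | @cons a b c h p ih =>
      rw [sup_adj, edge_adj] at h
      rcases h with hab | ⟨⟨rfl, rfl⟩ | ⟨rfl, rfl⟩, -⟩
      · have step {w : V} : F.Reachable b w → F.Reachable a w := hab.reachable.trans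
        exact ih.imp step (Or.imp (And.imp_left step) (And.imp_left step))
      all_goals have hrefl : F.Reachable a a := .rfl; tauto
  · have mono {a b : V} (h : F.Reachable a b) : (F ⊔ edge u v).Reachable a b :=
      h.mono le_sup_left
    have huv : (F ⊔ edge u v).Reachable u v := by
      by_cases h : u = v
      · exact h ▸ .rfl
      · exact Adj.reachable (by simp [edge_adj, h])
    rintro (h | ⟨hu, hv⟩ | ⟨hv, hu⟩)
    · exact mono h
    · exact (mono hu).trans (huv.trans (mono hv))
    · exact (mono hv).trans (huv.symm.trans (mono hu))

theorem reachable_sup_edge_iff_of_not_reachable {w x : V} (hu : ¬F.Reachable w u)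
    (hv : ¬F.Reachable w v) : (F ⊔ edge u v).Reachable w x ↔ F.Reachable w x := by
  simp only [reachable_sup_edge_iff, hu, hv, false_and, or_false]

theorem reachable_sup_edge_left_iff {x : V} :
    (F ⊔ edge u v).Reachable u x ↔ F.Reachable u x ∨ F.Reachable v x := by
  have hu : F.Reachable u u := .rfl
  rw [reachable_sup_edge_iff]
  tauto

theorem supp_connectedComponentMk (w : V) :
    (F.connectedComponentMk w).supp = {x | F.Reachable w x} := by
  ext x
  rw [ConnectedComponent.mem_supp_iff, ConnectedComponent.eq, reachable_comm, Set.mem_ofPred_eq]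

/-- The number of vertices in the connected component of `v` in `F`. -/
noncomputable def componentSize (F : SimpleGraph V) (v : V) : ℕ :=
  (F.connectedComponentMk v).supp.ncard

theorem componentSize_pos [Finite V] (v : V) : 0 < componentSize F v :=
  (Set.ncard_pos).2 (F.connectedComponentMk v).nonempty_supp

theorem componentSize_bot (v : V) : componentSize ⊥ v = 1 := by
  simp [componentSize, supp_connectedComponentMk, reachable_bot]

theorem componentSize_sup_edge_left [Finite V] (h : ¬F.Reachable u v) :
    componentSize (F ⊔ edge u v) u = componentSize F u + componentSize F v := by
  simp only [componentSize, supp_connectedComponentMk, reachable_sup_edge_left_iff]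
  refine Set.ncard_union_eq (Set.disjoint_left.2 fun x hu hv => h ?_)
  exact Reachable.trans hu (Reachable.symm hv)

theorem componentSize_sup_edge_of_not_reachable {w : V} (hu : ¬F.Reachable w u)
    (hv : ¬F.Reachable w v) : componentSize (F ⊔ edge u v) w = componentSize F w := by
  simp only [componentSize, supp_connectedComponentMk,
    reachable_sup_edge_iff_of_not_reachable hu hv]

theorem bijOn_map_sup_edge :
    Set.BijOn (ConnectedComponent.map (Hom.ofLE (le_sup_left : F ≤ F ⊔ edge u v)))
      {F.connectedComponentMk u, F.connectedComponentMk v}ᶜ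
      {(F ⊔ edge u v).connectedComponentMk u}ᶜ := by
  have hmem {w : V} : F.connectedComponentMk w ∈
      ({F.connectedComponentMk u, F.connectedComponentMk v}ᶜ : Set F.ConnectedComponent) ↔
      ¬F.Reachable w u ∧ ¬F.Reachable w v := by
    simp only [Set.mem_compl_iff, Set.mem_insert_iff, Set.mem_singleton_iff,
      ConnectedComponent.eq, not_or]
  refine ⟨?_, ?_, ?_⟩
  · refine fun C => C.ind fun w hw => ?_
    obtain ⟨hu, hv⟩ := hmem.1 hw
    simpa [reachable_sup_edge_iff_of_not_reachable hu hv] using hu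
  · refine fun C => C.ind fun w hw D => D.ind fun x _ hwx => ?_
    obtain ⟨hu, hv⟩ := hmem.1 hw
    simpa [reachable_sup_edge_iff_of_not_reachable hu hv] using hwx
  · refine fun C => C.ind fun w hw => ⟨F.connectedComponentMk w, hmem.2 ?_, rfl⟩
    rwa [Set.mem_compl_singleton_iff, Ne, ConnectedComponent.eq, reachable_comm,
      reachable_sup_edge_left_iff, not_or, reachable_comm, F.reachable_comm (u := v)] at hw

theorem card_connectedComponent_of_connected (hF : F.Connected) :
    Nat.card F.ConnectedComponent = 1 := by
  have := hF.preconnected.subsingleton_connectedComponent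
  have := hF.nonempty.map F.connectedComponentMk
  exact Nat.card_eq_one_iff_unique.2 ⟨inferInstance, inferInstance⟩

theorem card_connectedComponent_sup_edge [Finite V] (h : ¬F.Reachable u v) :
    Nat.card (F ⊔ edge u v).ConnectedComponent + 1 = Nat.card F.ConnectedComponent := by
  have hne : F.connectedComponentMk u ≠ F.connectedComponentMk v := mt ConnectedComponent.eq.1 h
  rw [← Set.ncard_add_ncard_compl {(F ⊔ edge u v).connectedComponentMk u},
    ← bijOn_map_sup_edge.ncard_eq,
    ← Set.ncard_add_ncard_compl {F.connectedComponentMk u, F.connectedComponentMk v},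
    Set.ncard_singleton, Set.ncard_pair hne]
  omega

/-- The product of the orders of the connected components of `F`; for a forest, this is the number
of ways of choosing a root in every tree. Only meaningful for finite `V`, since `∏ᶠ` is `1` when
infinitely many factors differ from `1`. -/
noncomputable def componentProd (F : SimpleGraph V) : ℕ :=
  ∏ᶠ C : F.ConnectedComponent, C.supp.ncard

theorem componentProd_bot : componentProd (⊥ : SimpleGraph V) = 1 :=
  finprod_eq_one_of_forall_eq_one fun C => C.ind componentSize_bot

theorem componentProd_of_connected (hF : F.Connected) : componentProd F = Nat.card V := by
  have := hF.preconnected.subsingleton_connectedComponent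
  obtain ⟨w⟩ := hF.nonempty
  have := uniqueOfSubsingleton (F.connectedComponentMk w)
  rw [componentProd, finprod_unique, Subsingleton.elim default (F.connectedComponentMk w),
    supp_connectedComponentMk]
  simp [hF.preconnected w]

theorem componentProd_sup_edge [Finite V] (h : ¬F.Reachable u v) :
    componentProd (F ⊔ edge u v) * (componentSize F u * componentSize F v) =
      componentProd F * (componentSize F u + componentSize F v) := by
  have split {G : SimpleGraph V} (S : Set G.ConnectedComponent) : componentProd G =
      (∏ᶠ C ∈ S, C.supp.ncard) * ∏ᶠ C ∈ Sᶜ, C.supp.ncard := by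
    rw [← finprod_mem_union disjoint_compl_right S.toFinite Sᶜ.toFinite, Set.union_compl_self,
      finprod_mem_univ, componentProd]
  have hrest : ∏ᶠ C ∈ ({F.connectedComponentMk u, F.connectedComponentMk v}ᶜ : Set _),
        C.supp.ncard =
      ∏ᶠ C ∈ ({(F ⊔ edge u v).connectedComponentMk u}ᶜ : Set _), C.supp.ncard := by
    refine finprod_mem_eq_of_bijOn _ bijOn_map_sup_edge fun C => C.ind fun w hw => ?_
    simp only [Set.mem_compl_iff, Set.mem_insert_iff, Set.mem_singleton_iff,
      ConnectedComponent.eq, not_or] at hw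
    exact (componentSize_sup_edge_of_not_reachable hw.1 hw.2).symm
  rw [split {F.connectedComponentMk u, F.connectedComponentMk v},
    split {(F ⊔ edge u v).connectedComponentMk u}, hrest,
    finprod_mem_pair (mt ConnectedComponent.eq.1 h), finprod_mem_singleton]
  change componentSize (F ⊔ edge u v) u * _ * _ = componentSize F u * componentSize F v * _ * _
  rw [componentSize_sup_edge_left h]
  ring

theorem cast_componentProd_sup_edge [Finite V] (h : ¬F.Reachable u v) :
    (componentProd (F ⊔ edge u v) : ℝ) =
      componentProd F * ((componentSize F u : ℝ)⁻¹ + (componentSize F v : ℝ)⁻¹) := by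
  have hu : (componentSize F u : ℝ) ≠ 0 := mod_cast (componentSize_pos u).ne'
  have hv : (componentSize F v : ℝ) ≠ 0 := mod_cast (componentSize_pos v).ne'
  have hprod := congrArg (Nat.cast (R := ℝ)) (componentProd_sup_edge h)
  push_cast at hprod
  field_simp
  linear_combination hprod

end Components

section ForestEdges

variable {V : Type*} {F T : SimpleGraph V} {u v : V}

theorem adj_iff_reachable_of_le_isAcyclic (hT : T.IsAcyclic) (hFT : F ≤ T) (huv : T.Adj u v) :
    F.Reachable u v ↔ F.Adj u v := by
  refine ⟨fun h => ?_, Adj.reachable⟩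
  have hac : (F ⊔ edge u v).IsAcyclic :=
    hT.anti (sup_le hFT ((edge_le_iff T).2 (.inr huv)))
  exact ((isAcyclic_sup_fromEdgeSet_iff.1 hac).2 h).resolve_left huv.ne

variable [Finite V]

theorem ncard_edgeSet_sup_edge (h : ¬F.Reachable u v) :
    (F ⊔ edge u v).edgeSet.ncard = F.edgeSet.ncard + 1 := by
  have huv : u ≠ v := fun huv => h (huv ▸ .rfl)
  have hadj : s(u, v) ∉ F.edgeSet := fun hF => h (Adj.reachable hF)
  rw [edgeSet_sup, edgeSet_edge_of_ne huv, Set.union_singleton, Set.ncard_insert_of_notMem hadj]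

theorem ncard_edgeSet_add_one_of_isTree (hT : T.IsTree) : T.edgeSet.ncard + 1 = Nat.card V :=
  (isTree_iff_connected_and_card.1 hT).2

theorem ncard_edgeSet_add_card_connectedComponent (hF : F.IsAcyclic) :
    F.edgeSet.ncard + Nat.card F.ConnectedComponent = Nat.card V := by
  induction hc : Nat.card F.ConnectedComponent generalizing F with
  | zero =>
    have : IsEmpty V := ⟨fun v => (Finite.card_pos_iff.2 ⟨F.connectedComponentMk v⟩).ne' hc⟩
    rw [Set.eq_empty_of_isEmpty F.edgeSet, Set.ncard_empty, Nat.card_of_isEmpty]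
  | succ c ih =>
    by_cases hconn : F.Preconnected
    · obtain ⟨C⟩ := (Finite.card_pos_iff (α := F.ConnectedComponent)).1 (by omega)
      have : Nonempty V := C.nonempty_supp.to_subtype.map Subtype.val
      have hcard := card_connectedComponent_of_connected ⟨hconn⟩
      have hedges := ncard_edgeSet_add_one_of_isTree ⟨⟨hconn⟩, hF⟩
      omega
    · simp only [Preconnected, not_forall] at hconn
      obtain ⟨u, v, huv⟩ := hconn
      have hcard := card_connectedComponent_sup_edge huv
      have hedges := ih (hF.sup_edge_of_not_reachable huv) (by omega)
      rw [ncard_edgeSet_sup_edge huv] at hedges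
      omega

end ForestEdges

section SingleEdge

variable {V : Type*} {u v w : V}

theorem reachable_edge_iff_of_ne {x : V} (hu : w ≠ u) (hv : w ≠ v) :
    (edge u v).Reachable w x ↔ w = x := by
  rw [← bot_sup_eq (edge u v), reachable_sup_edge_iff_of_not_reachable
    (mt reachable_bot.1 hu) (mt reachable_bot.1 hv), reachable_bot]

theorem isAcyclic_edge (huv : u ≠ v) : (edge u v).IsAcyclic := by
  rw [← bot_sup_eq (edge u v)]
  exact isAcyclic_bot.sup_edge_of_not_reachable (mt reachable_bot.1 huv)

theorem ncard_edgeSet_edge (huv : u ≠ v) : (edge u v).edgeSet.ncard = 1 := by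
  rw [edgeSet_edge_of_ne huv, Set.ncard_singleton]

theorem componentSize_edge_of_ne (hu : w ≠ u) (hv : w ≠ v) : componentSize (edge u v) w = 1 := by
  rw [← bot_sup_eq (edge u v), componentSize_sup_edge_of_not_reachable
    (mt reachable_bot.1 hu) (mt reachable_bot.1 hv), componentSize_bot]

variable [Finite V]

theorem componentSize_edge_left (huv : u ≠ v) : componentSize (edge u v) u = 2 := by
  rw [← bot_sup_eq (edge u v), componentSize_sup_edge_left (mt reachable_bot.1 huv),
    componentSize_bot, componentSize_bot]

theorem componentProd_edge (huv : u ≠ v) : componentProd (edge u v) = 2 := by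
  have hprod := componentProd_sup_edge (mt reachable_bot.1 huv)
  rwa [bot_sup_eq, componentSize_bot, componentSize_bot, componentProd_bot, mul_one, mul_one,
    one_mul] at hprod

end SingleEdge

section Counting

variable {V : Type*} [Fintype V] {F T : SimpleGraph V} {u v : V}

open scoped Classical in
/-- The spanning trees of the complete graph on `V` that contain `F`. -/
noncomputable def spanningTreesContaining (F : SimpleGraph V) : Finset (SimpleGraph V) :=
  {T | T.IsTree ∧ F ≤ T}

theorem mem_spanningTreesContaining : T ∈ spanningTreesContaining F ↔ T.IsTree ∧ F ≤ T := by
  simp [spanningTreesContaining]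

theorem spanningTreesContaining_of_isTree (hF : F.IsTree) : spanningTreesContaining F = {F} := by
  have := hF.connected.nonempty
  ext T
  rw [mem_spanningTreesContaining, mem_singleton]
  refine ⟨fun ⟨hT, hFT⟩ => ?_, by rintro rfl; exact ⟨hF, le_rfl⟩⟩
  exact ((maximal_isAcyclic_iff_isTree.2 hF).eq_of_le hT.isAcyclic hFT).symm

open scoped Classical in
theorem card_filter_not_reachable_adj (hT : T.IsTree) (hFT : F ≤ T) :
    #{p : V × V | ¬F.Reachable p.1 p.2 ∧ T.Adj p.1 p.2} =
      2 * (Nat.card F.ConnectedComponent - 1) := by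
  have hadj (p : V × V) : ¬F.Reachable p.1 p.2 ∧ T.Adj p.1 p.2 ↔ (T \ F).Adj p.1 p.2 := by
    rw [sdiff_adj, and_comm]
    exact and_congr_right fun h =>
      not_congr (adj_iff_reachable_of_le_isAcyclic hT.isAcyclic hFT h)
  have hF := ncard_edgeSet_add_card_connectedComponent (hT.isAcyclic.anti hFT)
  have hT' := ncard_edgeSet_add_one_of_isTree hT
  rw [filter_congr fun p _ => hadj p, ← two_mul_card_edgeFinset, ← Set.ncard_coe_finset,
    coe_edgeFinset, edgeSet_sdiff, Set.ncard_sdiff (edgeSet_mono hFT)]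
  omega

open scoped Classical in
theorem card_spanningTreesContaining_mul :
    #(spanningTreesContaining F) * (2 * (Nat.card F.ConnectedComponent - 1)) =
      ∑ p : V × V with ¬F.Reachable p.1 p.2, #(spanningTreesContaining (F ⊔ edge p.1 p.2)) := by
  have hcount := sum_card_bipartiteAbove_eq_sum_card_bipartiteBelow
    (fun (T : SimpleGraph V) (p : V × V) => T.Adj p.1 p.2)
    (s := spanningTreesContaining F) (t := {p | ¬F.Reachable p.1 p.2})
  rw [sum_congr rfl fun T hT => ?_, sum_const, smul_eq_mul] at hcount
  · rw [hcount]
    refine sum_congr rfl fun p hp => congrArg card ?_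
    have hne : p.1 ≠ p.2 := fun h => (mem_filter.1 hp).2 (h ▸ .rfl)
    ext T
    simp only [bipartiteBelow, mem_filter, mem_spanningTreesContaining, sup_le_iff, edge_le_iff,
      hne, false_or, and_assoc]
  · rw [mem_spanningTreesContaining] at hT
    rw [bipartiteAbove, filter_filter, card_filter_not_reachable_adj hT.1 hT.2]

theorem sum_componentSize_inv :
    ∑ v, (componentSize F v : ℝ)⁻¹ = Nat.card F.ConnectedComponent := by
  classical
  have hfiber (C : F.ConnectedComponent) :
      ∑ v with F.connectedComponentMk v = C, (componentSize F v : ℝ)⁻¹ = 1 := by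
    have hsize {v : V} (hv : v ∈ univ.filter (F.connectedComponentMk · = C)) :
        (componentSize F v : ℝ)⁻¹ = (C.supp.ncard : ℝ)⁻¹ := by
      rw [componentSize, (mem_filter.1 hv).2]
    have hcard : #{v | F.connectedComponentMk v = C} = C.supp.ncard := by
      rw [← Set.ncard_coe_finset, coe_filter_univ, ConnectedComponent.supp]
    have hpos : (C.supp.ncard : ℝ) ≠ 0 := mod_cast ((Set.ncard_pos).2 C.nonempty_supp).ne'
    rw [sum_congr rfl fun v hv => hsize hv, sum_const, hcard, nsmul_eq_mul, mul_inv_cancel₀ hpos]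
  rw [← sum_fiberwise _ F.connectedComponentMk, sum_congr rfl fun C _ => hfiber C, sum_const,
    card_univ, nsmul_eq_mul, mul_one, Nat.card_eq_fintype_card]

open scoped Classical in
theorem sum_not_reachable_componentSize_inv :
    ∑ p : V × V with ¬F.Reachable p.1 p.2, (componentSize F p.1 : ℝ)⁻¹ =
      Nat.card V * (Nat.card F.ConnectedComponent - 1) := by
  have hrow (u : V) : ∑ v with ¬F.Reachable u v, (componentSize F u : ℝ)⁻¹ =
      Nat.card V * (componentSize F u : ℝ)⁻¹ - 1 := by
    have hpos : (componentSize F u : ℝ) ≠ 0 := mod_cast (componentSize_pos u).ne'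
    have hreach : #{v | F.Reachable u v} = componentSize F u := by
      rw [← Set.ncard_coe_finset, coe_filter_univ, componentSize, supp_connectedComponentMk]
    have hsplit : (#{v | F.Reachable u v} : ℝ) + #{v | ¬F.Reachable u v} = Nat.card V := by
      rw [Nat.card_eq_fintype_card]
      exact mod_cast card_filter_add_card_filter_not (F.Reachable u)
    rw [hreach] at hsplit
    rw [sum_const, nsmul_eq_mul, ← hsplit, add_mul, mul_inv_cancel₀ hpos, add_sub_cancel_left]
  calc
    _ = ∑ u, ∑ v with ¬F.Reachable u v, (componentSize F u : ℝ)⁻¹ := by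
      simp only [sum_filter, Fintype.sum_prod_type]
    _ = Nat.card V * (Nat.card F.ConnectedComponent - 1) := by
      simp only [hrow, sum_sub_distrib, ← mul_sum, sum_componentSize_inv, sum_const, card_univ,
        nsmul_eq_mul, Nat.card_eq_fintype_card]
      ring

open scoped Classical in
theorem sum_not_reachable_componentProd_sup_edge :
    ∑ p : V × V with ¬F.Reachable p.1 p.2, (componentProd (F ⊔ edge p.1 p.2) : ℝ) =
      2 * (Nat.card F.ConnectedComponent - 1) * (Nat.card V * componentProd F) := by
  have hswap : ∑ p : V × V with ¬F.Reachable p.1 p.2, (componentSize F p.2 : ℝ)⁻¹ =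
      ∑ p : V × V with ¬F.Reachable p.1 p.2, (componentSize F p.1 : ℝ)⁻¹ :=
    sum_equiv (Equiv.prodComm V V) (by simp [F.reachable_comm]) fun _ _ => rfl
  rw [sum_congr rfl fun p hp => cast_componentProd_sup_edge (mem_filter.1 hp).2, ← mul_sum,
    sum_add_distrib, hswap, sum_not_reachable_componentSize_inv]
  ring

theorem card_spanningTreesContaining_mul_sq [Nonempty V] (hF : F.IsAcyclic) :
    #(spanningTreesContaining F) * Nat.card V ^ 2 =
      Nat.card V ^ Nat.card F.ConnectedComponent * componentProd F := by
  induction hc : Nat.card F.ConnectedComponent generalizing F with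
  | zero => exact absurd hc Finite.card_pos.ne'
  | succ c ih =>
    by_cases hconn : F.Connected
    · obtain rfl : c = 0 := by have := card_connectedComponent_of_connected hconn; omega
      rw [spanningTreesContaining_of_isTree ⟨hconn, hF⟩, componentProd_of_connected hconn,
        card_singleton]
      ring
    have hc0 : (2 * c : ℝ) ≠ 0 := by
      simp only [connected_iff, Preconnected, ‹Nonempty V›, and_true, not_forall] at hconn
      obtain ⟨u, v, huv⟩ := hconn
      have hcard := card_connectedComponent_sup_edge huv
      have hpos := Finite.card_pos (α := (F ⊔ edge u v).ConnectedComponent)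
      have : c ≠ 0 := by omega
      positivity
    classical
    have hstep (p : V × V) (hp : ¬F.Reachable p.1 p.2) :
        #(spanningTreesContaining (F ⊔ edge p.1 p.2)) * (Nat.card V : ℝ) ^ 2 =
          Nat.card V ^ c * componentProd (F ⊔ edge p.1 p.2) := by
      have hcard := card_connectedComponent_sup_edge hp
      exact mod_cast ih (hF.sup_edge_of_not_reachable hp) (by omega)
    have hcount := congrArg (Nat.cast (R := ℝ)) (card_spanningTreesContaining_mul (F := F))
    have hprod := sum_not_reachable_componentProd_sup_edge (F := F)
    simp only [hc, Nat.add_sub_cancel] at hcount hprod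
    push_cast at hcount hprod
    have hscaled : (2 * c : ℝ) * (#(spanningTreesContaining F) * Nat.card V ^ 2) =
        2 * c * (Nat.card V ^ (c + 1) * componentProd F) := by
      calc
        _ = ∑ p : V × V with ¬F.Reachable p.1 p.2,
              #(spanningTreesContaining (F ⊔ edge p.1 p.2)) * (Nat.card V : ℝ) ^ 2 := by
          rw [← sum_mul, ← hcount]; ring
        _ = Nat.card V ^ c * ∑ p : V × V with ¬F.Reachable p.1 p.2,
              (componentProd (F ⊔ edge p.1 p.2) : ℝ) := by
          rw [mul_sum, sum_congr rfl fun p hp => hstep p (mem_filter.1 hp).2]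
        _ = 2 * c * (Nat.card V ^ (c + 1) * componentProd F) := by rw [hprod]; ring
    have hcancel := mul_left_cancel₀ hc0 hscaled
    exact mod_cast hcancel

theorem card_spanningTreesContaining [Nontrivial V] (hF : F.IsAcyclic) :
    (#(spanningTreesContaining F) : ℝ) = (Nat.card V : ℝ) ^ (Nat.card V - 2) *
      (componentProd F / (Nat.card V : ℝ) ^ F.edgeSet.ncard) := by
  have hn : 1 < Nat.card V := Finite.one_lt_card
  have hn0 : (Nat.card V : ℝ) ≠ 0 := by positivity
  have hforest := congrArg (Nat.cast (R := ℝ)) (card_spanningTreesContaining_mul_sq hF)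
  have hpow : (Nat.card V : ℝ) ^ (Nat.card V - 2) * (Nat.card V : ℝ) ^ 2 =
      (Nat.card V : ℝ) ^ F.edgeSet.ncard * (Nat.card V : ℝ) ^ Nat.card F.ConnectedComponent := by
    rw [← pow_add, ← pow_add, ncard_edgeSet_add_card_connectedComponent hF]
    congr 1
    omega
  push_cast at hforest
  rw [mul_div_assoc', eq_div_iff (by positivity)]
  refine mul_right_cancel₀ (pow_ne_zero 2 hn0) ?_
  linear_combination (Nat.card V : ℝ) ^ F.edgeSet.ncard * hforest - componentProd F * hpow

theorem card_spanningTreesContaining_edge (huv : u ≠ v) :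
    (#(spanningTreesContaining (edge u v)) : ℝ) =
      (Nat.card V : ℝ) ^ (Nat.card V - 2) * (2 / Nat.card V) := by
  have : Nontrivial V := ⟨u, v, huv⟩
  rw [card_spanningTreesContaining (isAcyclic_edge huv), componentProd_edge huv,
    ncard_edgeSet_edge huv, pow_one, Nat.cast_ofNat]

theorem card_spanningTreesContaining_edge_sup_edge {w x : V} (huv : u ≠ v)
    (hwx : ¬(edge u v).Reachable w x) :
    (#(spanningTreesContaining (edge u v ⊔ edge w x)) : ℝ) =
      (Nat.card V : ℝ) ^ (Nat.card V - 2) *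
        (componentProd (edge u v ⊔ edge w x) / (Nat.card V : ℝ) ^ 2) := by
  have : Nontrivial V := ⟨u, v, huv⟩
  rw [card_spanningTreesContaining ((isAcyclic_edge huv).sup_edge_of_not_reachable hwx),
    ncard_edgeSet_sup_edge hwx, ncard_edgeSet_edge huv]

theorem card_spanningTreesContaining_of_adjacent_edges {w : V} (huv : u ≠ v) (hu : w ≠ u)
    (hv : w ≠ v) :
    (#(spanningTreesContaining (edge u v ⊔ edge u w)) : ℝ) =
      (Nat.card V : ℝ) ^ (Nat.card V - 2) * (3 / (Nat.card V : ℝ) ^ 2) := by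
  have huw : ¬(edge u v).Reachable u w := fun h => hu ((reachable_edge_iff_of_ne hu hv).1 h.symm)
  have hprod := componentProd_sup_edge huw
  rw [componentSize_edge_left huv, componentSize_edge_of_ne hu hv,
    componentProd_edge huv] at hprod
  have h3 : componentProd (edge u v ⊔ edge u w) = 3 := by omega
  rw [card_spanningTreesContaining_edge_sup_edge huv huw, h3, Nat.cast_ofNat]

theorem card_spanningTreesContaining_of_disjoint_edges {w x : V} (huv : u ≠ v) (hwx : w ≠ x)
    (hwu : w ≠ u) (hwv : w ≠ v) (hxu : x ≠ u) (hxv : x ≠ v) :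
    (#(spanningTreesContaining (edge u v ⊔ edge w x)) : ℝ) =
      (Nat.card V : ℝ) ^ (Nat.card V - 2) * (4 / (Nat.card V : ℝ) ^ 2) := by
  have hreach : ¬(edge u v).Reachable w x := mt (reachable_edge_iff_of_ne hwu hwv).1 hwx
  have hprod := componentProd_sup_edge hreach
  rw [componentSize_edge_of_ne hwu hwv, componentSize_edge_of_ne hxu hxv,
    componentProd_edge huv] at hprod
  have h4 : componentProd (edge u v ⊔ edge w x) = 4 := by omega
  rw [card_spanningTreesContaining_edge_sup_edge huv hreach, h4, Nat.cast_ofNat]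

end Counting

section Bonferroni

variable {ι α : Type*} [DecidableEq ι] [DecidableEq α]

theorem two_mul_sum_card_le_two_mul_card_biUnion_add (s : Finset ι) (A : ι → Finset α) :
    2 * ∑ i ∈ s, #(A i) ≤ 2 * #(s.biUnion A) + ∑ i ∈ s, ∑ j ∈ s.erase i, #(A i ∩ A j) := by
  induction s using Finset.induction with
  | empty => simp
  | insert a s ha ih =>
    have hinter : #(A a ∩ s.biUnion A) ≤ ∑ j ∈ s, #(A a ∩ A j) := by
      rw [inter_biUnion]
      exact card_biUnion_le
    have hrow {i : ι} (hi : i ∈ s) : ∑ j ∈ (insert a s).erase i, #(A i ∩ A j) =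
        #(A a ∩ A i) + ∑ j ∈ s.erase i, #(A i ∩ A j) := by
      have hai : a ≠ i := fun h => ha (h ▸ hi)
      rw [erase_insert_of_ne hai, sum_insert (fun h => ha (mem_of_mem_erase h)),
        inter_comm (A i) (A a)]
    rw [sum_insert ha, biUnion_insert, sum_insert ha, erase_insert ha,
      sum_congr rfl fun i hi => hrow hi, sum_add_distrib]
    have hunion := card_union_add_card_inter (A a) (s.biUnion A)
    omega

end Bonferroni

section EdgePairs

variable {V : Type*} [Fintype V] [DecidableEq V] {u v : V}

theorem card_filter_edgeFinset_mem_or_mem_add_one {G : SimpleGraph V} [DecidableRel G.Adj]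
    (h : G.Adj u v) : #{e ∈ G.edgeFinset | u ∈ e ∨ v ∈ e} + 1 = G.degree u + G.degree v := by
  have hinter : G.incidenceFinset u ∩ G.incidenceFinset v = {s(u, v)} := by
    rw [← coe_inj, coe_inter, coe_incidenceFinset, coe_incidenceFinset, coe_singleton,
      G.incidenceSet_inter_incidenceSet_of_adj h]
  rw [filter_or, ← incidenceFinset_eq_filter, ← incidenceFinset_eq_filter,
    ← card_incidenceFinset_eq_degree, ← card_incidenceFinset_eq_degree,
    ← card_union_add_card_inter, hinter, card_singleton]

theorem cast_card_edgeFinset_top :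
    (#(⊤ : SimpleGraph V).edgeFinset : ℝ) = (Nat.card V : ℝ) * (Nat.card V - 1) / 2 := by
  rw [card_edgeFinset_top_eq_card_choose_two, Nat.cast_choose_two, Nat.card_eq_fintype_card]

theorem sum_erase_edgeFinset_top {g : Sym2 V → ℝ} {a b : ℝ} (huv : u ≠ v)
    (hadj : ∀ e ∈ (⊤ : SimpleGraph V).edgeFinset, e ≠ s(u, v) → (u ∈ e ∨ v ∈ e) → g e = a)
    (hdisj : ∀ e ∈ (⊤ : SimpleGraph V).edgeFinset, ¬(u ∈ e ∨ v ∈ e) → g e = b) :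
    ∑ e ∈ (⊤ : SimpleGraph V).edgeFinset.erase s(u, v), g e =
      2 * ((Nat.card V : ℝ) - 2) * a + ((Nat.card V : ℝ) - 2) * ((Nat.card V : ℝ) - 3) / 2 * b := by
  set E := (⊤ : SimpleGraph V).edgeFinset
  have hmem : s(u, v) ∈ E.filter fun e => u ∈ e ∨ v ∈ e := by simp [E, huv]
  have hmeet : (#{e ∈ E | u ∈ e ∨ v ∈ e} : ℝ) = 2 * Nat.card V - 3 := by
    have hcard : #{e ∈ E | u ∈ e ∨ v ∈ e} + 1 = _ :=
      card_filter_edgeFinset_mem_or_mem_add_one ((top_adj u v).2 huv)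
    have hpos : 0 < Fintype.card V := Fintype.card_pos_iff.2 ⟨u⟩
    rw [complete_graph_degree, complete_graph_degree] at hcard
    rw [eq_sub_iff_add_eq, Nat.card_eq_fintype_card]
    norm_cast
    omega
  have hsplit : (#{e ∈ E | u ∈ e ∨ v ∈ e} : ℝ) + #{e ∈ E | ¬(u ∈ e ∨ v ∈ e)} = #E :=
    mod_cast card_filter_add_card_filter_not _
  rw [hmeet, cast_card_edgeFinset_top] at hsplit
  have hnot : s(u, v) ∉ E.filter fun e => ¬(u ∈ e ∨ v ∈ e) := by simp
  rw [← sum_filter_add_sum_filter_not _ fun e => u ∈ e ∨ v ∈ e, filter_erase, filter_erase,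
    erase_eq_of_notMem hnot,
    sum_congr rfl fun e he => hadj e (mem_filter.1 (mem_of_mem_erase he)).1 (ne_of_mem_erase he)
      (mem_filter.1 (mem_of_mem_erase he)).2,
    sum_congr rfl fun e he => hdisj e (mem_filter.1 he).1 (mem_filter.1 he).2,
    sum_const, sum_const, nsmul_eq_mul, nsmul_eq_mul, cast_card_erase_of_mem hmem, hmeet]
  linear_combination b * hsplit

end EdgePairs

section TreeFamilies

variable {ι V : Type*} [Fintype ι] [Fintype V] {F G : SimpleGraph V} {u v : V}

open scoped Classical in
/-- The families `(T i)` of spanning trees of the complete graph on `V`, indexed by `ι`, all of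
which contain `F`. -/
noncomputable def treeFamiliesContaining (ι : Type*) [Fintype ι] (F : SimpleGraph V) :
    Finset (ι → SimpleGraph V) :=
  Fintype.piFinset fun _ => spanningTreesContaining F

theorem mem_treeFamiliesContaining {f : ι → SimpleGraph V} :
    f ∈ treeFamiliesContaining ι F ↔ ∀ i, (f i).IsTree ∧ F ≤ f i := by
  simp only [treeFamiliesContaining, Fintype.mem_piFinset, mem_spanningTreesContaining]

theorem card_treeFamiliesContaining :
    #(treeFamiliesContaining ι F) = #(spanningTreesContaining F) ^ Fintype.card ι := by
  simp only [treeFamiliesContaining, Fintype.card_piFinset, prod_const, card_univ]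

open scoped Classical in
theorem treeFamiliesContaining_inter :
    treeFamiliesContaining ι F ∩ treeFamiliesContaining ι G =
      treeFamiliesContaining ι (F ⊔ G) := by
  ext f
  simp only [mem_inter, mem_treeFamiliesContaining, sup_le_iff]
  exact ⟨fun ⟨hF, hG⟩ i => ⟨(hF i).1, (hF i).2, (hG i).2⟩,
    fun h => ⟨fun i => ⟨(h i).1, (h i).2.1⟩, fun i => ⟨(h i).1, (h i).2.2⟩⟩⟩

open scoped Classical in
theorem sum_card_treeFamiliesContaining_inter (huv : u ≠ v) :
    ∑ e ∈ (⊤ : SimpleGraph V).edgeFinset.erase s(u, v),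
        (#(treeFamiliesContaining ι (fromEdgeSet {s(u, v)}) ∩
          treeFamiliesContaining ι (fromEdgeSet {e})) : ℝ) =
      2 * ((Nat.card V : ℝ) - 2) *
          ((Nat.card V : ℝ) ^ (Nat.card V - 2) * (3 / (Nat.card V : ℝ) ^ 2)) ^ Fintype.card ι +
        ((Nat.card V : ℝ) - 2) * ((Nat.card V : ℝ) - 3) / 2 *
          ((Nat.card V : ℝ) ^ (Nat.card V - 2) * (4 / (Nat.card V : ℝ) ^ 2)) ^ Fintype.card ι := by
  have hcard (e : Sym2 V) : (#(treeFamiliesContaining ι (fromEdgeSet {s(u, v)}) ∩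
      treeFamiliesContaining ι (fromEdgeSet {e})) : ℝ) =
        (#(spanningTreesContaining (edge u v ⊔ fromEdgeSet {e})) : ℝ) ^ Fintype.card ι := by
    rw [treeFamiliesContaining_inter, card_treeFamiliesContaining, Nat.cast_pow, edge]
  refine sum_erase_edgeFinset_top huv (fun e he hne hmeet => ?_) (fun e he hmeet => ?_)
  · rw [hcard]
    congr 1
    rcases hmeet with ⟨w, rfl⟩ | ⟨w, rfl⟩
    all_goals rw [mem_edgeFinset, mem_edgeSet] at he
    · have hwv : w ≠ v := fun h => hne (by rw [h])
      exact card_spanningTreesContaining_of_adjacent_edges huv he.ne' hwv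
    · have hwu : w ≠ u := fun h => hne (by rw [h, Sym2.eq_swap])
      rw [edge_comm]
      exact card_spanningTreesContaining_of_adjacent_edges huv.symm he.ne' hwu
  · rw [hcard]
    congr 1
    induction e with | h w x
    rw [mem_edgeFinset, mem_edgeSet] at he
    simp only [Sym2.mem_iff, not_or] at hmeet
    exact card_spanningTreesContaining_of_disjoint_edges huv he.ne
      (Ne.symm hmeet.1.1) (Ne.symm hmeet.2.1) (Ne.symm hmeet.1.2) (Ne.symm hmeet.2.2)

theorem card_treeFamiliesContaining_edge (huv : u ≠ v) :
    (#(treeFamiliesContaining ι (edge u v)) : ℝ) =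
      ((Nat.card V : ℝ) ^ (Nat.card V - 2) * (2 / Nat.card V)) ^ Fintype.card ι := by
  rw [card_treeFamiliesContaining, Nat.cast_pow, card_spanningTreesContaining_edge huv]

open scoped Classical in
/-- The families of spanning trees of the complete graph on `V`, indexed by `ι`, with a common
edge. -/
noncomputable def treeFamiliesWithCommonEdge (ι V : Type*) [Fintype ι] [Fintype V] :
    Finset (ι → SimpleGraph V) :=
  (⊤ : SimpleGraph V).edgeFinset.biUnion fun e => treeFamiliesContaining ι (fromEdgeSet {e})

theorem mem_treeFamiliesWithCommonEdge [Nonempty ι] {f : ι → SimpleGraph V} :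
    f ∈ treeFamiliesWithCommonEdge ι V ↔ (∀ i, (f i).IsTree) ∧ ∃ e, ∀ i, e ∈ (f i).edgeSet := by
  have hle {T : SimpleGraph V} {e : Sym2 V} (he : ¬e.IsDiag) :
      fromEdgeSet {e} ≤ T ↔ e ∈ T.edgeSet := by
    induction e with | h u v
    exact (edge_le_iff T).trans (or_iff_right he)
  classical
  simp only [treeFamiliesWithCommonEdge, mem_biUnion, mem_treeFamiliesContaining, mem_edgeFinset]
  constructor
  · rintro ⟨e, he, hf⟩
    exact ⟨fun i => (hf i).1, e, fun i => (hle (not_isDiag_of_mem_edgeSet _ he)).1 (hf i).2⟩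
  · rintro ⟨hf, e, he⟩
    have hdiag := not_isDiag_of_mem_edgeSet _ (he (Classical.arbitrary ι))
    exact ⟨e, by simpa using hdiag, fun i => ⟨hf i, (hle hdiag).2 (he i)⟩⟩

theorem sum_card_treeFamiliesContaining_edge [DecidableEq V] :
    ∑ e ∈ (⊤ : SimpleGraph V).edgeFinset, (#(treeFamiliesContaining ι (fromEdgeSet {e})) : ℝ) =
      (Nat.card V : ℝ) * (Nat.card V - 1) / 2 *
        ((Nat.card V : ℝ) ^ (Nat.card V - 2) * (2 / Nat.card V)) ^ Fintype.card ι := by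
  rw [← cast_card_edgeFinset_top, ← nsmul_eq_mul]
  refine sum_eq_card_nsmul fun e he => ?_
  induction e with | h u v
  rw [mem_edgeFinset, mem_edgeSet] at he
  exact card_treeFamiliesContaining_edge he.ne

open scoped Classical in
theorem sum_sum_card_treeFamiliesContaining_inter :
    ∑ e ∈ (⊤ : SimpleGraph V).edgeFinset, ∑ e' ∈ (⊤ : SimpleGraph V).edgeFinset.erase e,
        (#(treeFamiliesContaining ι (fromEdgeSet {e}) ∩
          treeFamiliesContaining ι (fromEdgeSet {e'})) : ℝ) =
      (Nat.card V : ℝ) * (Nat.card V - 1) / 2 * (2 * ((Nat.card V : ℝ) - 2) *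
          ((Nat.card V : ℝ) ^ (Nat.card V - 2) * (3 / (Nat.card V : ℝ) ^ 2)) ^ Fintype.card ι +
        ((Nat.card V : ℝ) - 2) * ((Nat.card V : ℝ) - 3) / 2 *
          ((Nat.card V : ℝ) ^ (Nat.card V - 2) * (4 / (Nat.card V : ℝ) ^ 2)) ^ Fintype.card ι) := by
  rw [← cast_card_edgeFinset_top, ← nsmul_eq_mul]
  refine sum_eq_card_nsmul fun e he => ?_
  induction e with | h u v
  rw [mem_edgeFinset, mem_edgeSet] at he
  exact sum_card_treeFamiliesContaining_inter he.ne

theorem card_treeFamiliesWithCommonEdge_le :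
    (#(treeFamiliesWithCommonEdge ι V) : ℝ) ≤ (Nat.card V : ℝ) * (Nat.card V - 1) / 2 *
      ((Nat.card V : ℝ) ^ (Nat.card V - 2) * (2 / Nat.card V)) ^ Fintype.card ι := by
  classical
  rw [← sum_card_treeFamiliesContaining_edge]
  exact mod_cast card_biUnion_le

theorem le_card_treeFamiliesWithCommonEdge :
    (Nat.card V : ℝ) * (Nat.card V - 1) / 2 *
        ((Nat.card V : ℝ) ^ (Nat.card V - 2) * (2 / Nat.card V)) ^ Fintype.card ι -
      (Nat.card V : ℝ) * (Nat.card V - 1) * (Nat.card V - 2) / 2 *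
        ((Nat.card V : ℝ) ^ (Nat.card V - 2) * (3 / (Nat.card V : ℝ) ^ 2)) ^ Fintype.card ι -
      (Nat.card V : ℝ) * (Nat.card V - 1) * (Nat.card V - 2) * (Nat.card V - 3) / 8 *
        ((Nat.card V : ℝ) ^ (Nat.card V - 2) * (4 / (Nat.card V : ℝ) ^ 2)) ^ Fintype.card ι ≤
      #(treeFamiliesWithCommonEdge ι V) := by
  classical
  have hbonf := two_mul_sum_card_le_two_mul_card_biUnion_add (⊤ : SimpleGraph V).edgeFinset
    fun e => treeFamiliesContaining ι (fromEdgeSet {e})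
  have hbonf' := Nat.cast_le (α := ℝ).2 hbonf
  push_cast at hbonf'
  rw [sum_card_treeFamiliesContaining_edge, sum_sum_card_treeFamiliesContaining_inter] at hbonf'
  rw [treeFamiliesWithCommonEdge]
  linarith

end TreeFamilies

section Probability

variable {k n : ℕ}

theorem probCommonEdgeExists_eq (hk : k ≠ 0) : probCommonEdgeExists k n =
    #(treeFamiliesWithCommonEdge (Fin k) (Fin n)) / ((n : ℝ) ^ (n - 2)) ^ k := by
  have : NeZero k := ⟨hk⟩
  rw [probCommonEdgeExists, Nat.subtype_card _ fun f => mem_treeFamiliesWithCommonEdge,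
    mul_comm k, pow_mul]

theorem probCommonEdgeExists_le (hk : k ≠ 0) (hn : n ≠ 0) :
    probCommonEdgeExists k n ≤ (n : ℝ) * ((n : ℝ) - 1) / 2 * (2 / n) ^ k := by
  have hcard := card_treeFamiliesWithCommonEdge_le (ι := Fin k) (V := Fin n)
  rw [Nat.card_fin, Fintype.card_fin, mul_pow] at hcard
  rw [probCommonEdgeExists_eq hk, div_le_iff₀ (by positivity)]
  linarith

theorem le_probCommonEdgeExists (hk : k ≠ 0) (hn : n ≠ 0) :
    (n : ℝ) * ((n : ℝ) - 1) / 2 * (2 / n) ^ k -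
        (n : ℝ) * ((n : ℝ) - 1) * ((n : ℝ) - 2) / 2 * (3 / (n : ℝ) ^ 2) ^ k -
        (n : ℝ) * ((n : ℝ) - 1) * ((n : ℝ) - 2) * ((n : ℝ) - 3) / 8 * (4 / (n : ℝ) ^ 2) ^ k ≤
      probCommonEdgeExists k n := by
  have hcard := le_card_treeFamiliesWithCommonEdge (ι := Fin k) (V := Fin n)
  rw [Nat.card_fin, Fintype.card_fin, mul_pow, mul_pow, mul_pow] at hcard
  rw [probCommonEdgeExists_eq hk, le_div_iff₀ (by positivity)]
  linarith

theorem abs_probCommonEdgeExists_sub_le (hk : k ≠ 0) (hn : 3 ≤ n) :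
    |probCommonEdgeExists k n - (n : ℝ) * ((n : ℝ) - 1) / 2 * (2 / n) ^ k| ≤
      (3 ^ k / 2 + 4 ^ k / 8) * (n : ℝ) ^ ((4 : ℤ) - 2 * k) := by
  have hn3 : (3 : ℝ) ≤ n := mod_cast hn
  have hn0 : n ≠ 0 := by omega
  have hupper := probCommonEdgeExists_le hk hn0
  have hlower := le_probCommonEdgeExists hk hn0
  have hzpow : (n : ℝ) ^ ((4 : ℤ) - 2 * k) = (n : ℝ) ^ 4 * (1 / ((n : ℝ) ^ 2) ^ k) := by
    rw [zpow_sub₀ (by positivity), ← pow_mul, mul_one_div]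
    norm_cast
  have hcubic : (n : ℝ) * ((n : ℝ) - 1) * ((n : ℝ) - 2) ≤ (n : ℝ) ^ 4 := by
    calc
      _ ≤ (n : ℝ) * n * n := by gcongr <;> linarith
      _ = (n : ℝ) ^ 3 := by ring
      _ ≤ (n : ℝ) ^ 4 := pow_le_pow_right₀ (by linarith) (by norm_num)
  have hquartic : (n : ℝ) * ((n : ℝ) - 1) * ((n : ℝ) - 2) * ((n : ℝ) - 3) ≤ (n : ℝ) ^ 4 := by
    calc
      _ ≤ (n : ℝ) * n * n * n := by gcongr <;> linarith
      _ = (n : ℝ) ^ 4 := by ring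
  have hscale : 0 ≤ 1 / ((n : ℝ) ^ 2) ^ k := by positivity
  rw [div_pow 3, div_pow 4, ← mul_one_div (3 ^ k), ← mul_one_div (4 ^ k)] at hlower
  rw [abs_sub_comm, abs_of_nonneg (sub_nonneg.2 hupper), hzpow]
  calc
    _ ≤ 3 ^ k / 2 * ((n : ℝ) * (n - 1) * (n - 2) * (1 / ((n : ℝ) ^ 2) ^ k)) +
        4 ^ k / 8 * ((n : ℝ) * (n - 1) * (n - 2) * (n - 3) * (1 / ((n : ℝ) ^ 2) ^ k)) := by
      linarith
    _ ≤ 3 ^ k / 2 * ((n : ℝ) ^ 4 * (1 / ((n : ℝ) ^ 2) ^ k)) +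
        4 ^ k / 8 * ((n : ℝ) ^ 4 * (1 / ((n : ℝ) ^ 2) ^ k)) := by
      gcongr
    _ = _ := by ring

theorem tendsto_probCommonEdgeExists (hk : 3 ≤ k) :
    Filter.Tendsto (fun n => probCommonEdgeExists k n) Filter.atTop (nhds 0) := by
  refine squeeze_zero' (.of_forall fun n => ?_) ?_
    (tendsto_const_div_atTop_nhds_zero_nat ((2 : ℝ) ^ k))
  · unfold probCommonEdgeExists
    positivity
  · filter_upwards [Filter.eventually_ne_atTop 0] with n hn
    have hn1 : (1 : ℝ) ≤ n := mod_cast Nat.one_le_iff_ne_zero.2 hn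
    calc
      probCommonEdgeExists k n ≤ (n : ℝ) * (n - 1) / 2 * (2 / n) ^ k :=
        probCommonEdgeExists_le (by omega) hn
      _ ≤ (n : ℝ) ^ 2 * (2 ^ k / (n : ℝ) ^ 3) := by
        rw [div_pow]
        gcongr
        nlinarith
      _ = 2 ^ k / n := by field_simp

end Probability

end CommonEdge

/-- Fix `k ≥ 3`.  For all `n ≥ 4`,
`C(n,2)(2/n)^k − (n(n−1)(n−2)/2)(3/n²)^k − (n(n−1)(n−2)(n−3)/8)(4/n²)^k ≤ p_n ≤
C(n,2)(2/n)^k`.  Consequently `p_n = C(n,2)(2/n)^k − O(n^(4−2k))`, and in particular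
`p_n → 0` as `n → ∞`. -/
theorem probability_common_edge_k_trees (k : ℕ) (hk : 3 ≤ k) :
    (∀ n : ℕ, 4 ≤ n →
        (n : ℝ) * ((n : ℝ) - 1) / 2 * (2 / n) ^ k -
              (n : ℝ) * ((n : ℝ) - 1) * ((n : ℝ) - 2) / 2 * (3 / (n : ℝ) ^ 2) ^ k -
              (n : ℝ) * ((n : ℝ) - 1) * ((n : ℝ) - 2) * ((n : ℝ) - 3) / 8 *
                (4 / (n : ℝ) ^ 2) ^ k ≤
            probCommonEdgeExists k n ∧
          probCommonEdgeExists k n ≤ (n : ℝ) * ((n : ℝ) - 1) / 2 * (2 / n) ^ k) ∧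
      (∃ C : ℝ, 0 < C ∧ ∀ n : ℕ, 4 ≤ n →
        |probCommonEdgeExists k n - (n : ℝ) * ((n : ℝ) - 1) / 2 * (2 / n) ^ k| ≤
          C * (n : ℝ) ^ ((4 : ℤ) - 2 * k)) ∧
      Filter.Tendsto (fun n => probCommonEdgeExists k n) Filter.atTop (nhds 0) := by
  have hk0 : k ≠ 0 := by omega
  refine ⟨fun n hn => ?_, ⟨3 ^ k / 2 + 4 ^ k / 8, by positivity, fun n hn => ?_⟩,
    CommonEdge.tendsto_probCommonEdgeExists hk⟩
  · have hn0 : n ≠ 0 := by omega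
    exact ⟨CommonEdge.le_probCommonEdgeExists hk0 hn0, CommonEdge.probCommonEdgeExists_le hk0 hn0⟩
  · exact CommonEdge.abs_probCommonEdgeExists_sub_le hk0 (by omega)
end

section
/- Fix a real number p with 0 < p ≤ 1. Then E[p^{−X_n}] = Σ_{m=0}^{n−1} p^{−m} P(X_n = m) converges to e^{2/p − 2} as n → ∞. -/
namespace UniformSpanningTree

open Finset SimpleGraph Filter Topology

section Poisson

/-- The `k`-th binomial moment `E[C(X, k)]` of a random variable `X` with values in
`{0, …, N - 1}`, where `w m = P(X = m)`. -/
noncomputable def binomialMoment (w : ℕ → ℝ) (N k : ℕ) : ℝ :=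
  ∑ m ∈ range N, m.choose k * w m

variable {𝔸 : Type*} [NormedRing 𝔸] [NormedAlgebra ℝ 𝔸]

lemma sum_smul_pow_eq_sum_binomialMoment (w : ℕ → ℝ) (N : ℕ) (z : 𝔸) :
    ∑ m ∈ range N, w m • z ^ m = ∑ k ∈ range N, binomialMoment w N k • (z - 1) ^ k := by
  have hpow : ∀ m ∈ range N, z ^ m = ∑ k ∈ range N, (m.choose k : ℝ) • (z - 1) ^ k := by
    intro m hm
    have hsub : range (m + 1) ⊆ range N := range_subset_range.2 (mem_range.1 hm)
    rw [← sum_subset hsub fun k _ hk ↦ by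
      rw [Nat.choose_eq_zero_of_lt (by simpa using hk), Nat.cast_zero, zero_smul]]
    conv_lhs => rw [← sub_add_cancel z 1, (Commute.one_right _).add_pow]
    simp [Nat.cast_smul_eq_nsmul, nsmul_eq_mul, (Nat.cast_commute _ _).eq]
  simp only [binomialMoment, sum_smul, mul_smul]
  rw [sum_comm]
  refine sum_congr rfl fun m hm ↦ ?_
  rw [hpow m hm, smul_sum]
  exact sum_congr rfl fun k _ ↦ smul_comm _ _ _

lemma binomialMoment_eq_zero_of_le {w : ℕ → ℝ} {N k : ℕ} (h : N ≤ k) :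
    binomialMoment w N k = 0 :=
  sum_eq_zero fun m hm ↦ by
    rw [Nat.choose_eq_zero_of_lt ((mem_range.1 hm).trans_le h), Nat.cast_zero, zero_mul]

/-- Expanding `z ^ m` around `1` turns the sum into a series in the binomial moments, to which
dominated convergence applies. The limit `r ^ k / k !` is the `k`-th binomial moment of the Poisson
distribution with parameter `r`. -/
lemma tendsto_sum_smul_pow_of_tendsto_binomialMoment [CompleteSpace 𝔸] {P : ℕ → ℕ → ℝ} {r C : ℝ}
    (hlim : ∀ k, Tendsto (fun n ↦ binomialMoment (P n) n k) atTop (𝓝 (r ^ k / k.factorial)))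
    (hbound : ∀ᶠ n in atTop, ∀ k, |binomialMoment (P n) n k| ≤ C ^ k / k.factorial) (z : 𝔸) :
    Tendsto (fun n ↦ ∑ m ∈ range n, P n m • z ^ m) atTop (𝓝 (NormedSpace.exp (r • (z - 1)))) := by
  have htsum (n : ℕ) : ∑ m ∈ range n, P n m • z ^ m =
      ∑' k, binomialMoment (P n) n k • (z - 1) ^ k := by
    rw [sum_smul_pow_eq_sum_binomialMoment, tsum_eq_sum (s := range n) fun k hk ↦ by
      rw [binomialMoment_eq_zero_of_le (by simpa using hk), zero_smul]]
  have hexp : NormedSpace.exp (r • (z - 1)) =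
      ∑' k : ℕ, (r ^ k / k.factorial) • (z - 1) ^ k := by
    rw [← (NormedSpace.exp_series_hasSum_exp' (𝕂 := ℝ) (r • (z - 1))).tsum_eq]
    simp only [smul_pow, smul_smul, div_eq_inv_mul]
  simp only [htsum, hexp]
  refine tendsto_tsum_of_dominated_convergence
    (NormedSpace.norm_expSeries_summable' (𝕂 := ℝ) (C • (z - 1)))
    (fun k ↦ (hlim k).smul_const _) ?_
  filter_upwards [hbound] with n hn k
  rw [norm_smul, Real.norm_eq_abs, smul_pow, smul_smul, norm_smul]
  gcongr
  exact (hn k).trans ((le_abs_self _).trans_eq (by rw [div_eq_inv_mul, Real.norm_eq_abs]))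

end Poisson

section Forests

variable {V : Type*} {F T H : SimpleGraph V} {u v x y : V}

lemma reachable_sup_edge_iff : (F ⊔ edge u v).Reachable x y ↔
    F.Reachable x y ∨ F.Reachable x u ∧ F.Reachable v y ∨ F.Reachable x v ∧ F.Reachable u y := by
  constructor
  · rintro ⟨p⟩
    induction p with
    | nil => exact .inl .rfl
    | cons hadj _ ih =>
      rcases hadj with hadj | hadj
      · have := hadj.reachable
        grind [Reachable.trans]
      · grind [Reachable.refl]
  · have huv : (F ⊔ edge u v).Reachable u v := by
      rcases eq_or_ne u v with rfl | hne
      · rfl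
      · exact Adj.reachable (.inr ((edge_adj ..).2 ⟨.inl ⟨rfl, rfl⟩, hne⟩))
    have hF {a b : V} (h : F.Reachable a b) : (F ⊔ edge u v).Reachable a b := h.mono le_sup_left
    rintro (h | ⟨hxu, hvy⟩ | ⟨hxv, huy⟩)
    · exact hF h
    · exact (hF hxu).trans (huv.trans (hF hvy))
    · exact (hF hxv).trans (huv.symm.trans (hF huy))

lemma supp_connectedComponentMk_sup_edge (h : F.Reachable x u ∨ F.Reachable x v) :
    ((F ⊔ edge u v).connectedComponentMk x).supp =
      (F.connectedComponentMk u).supp ∪ (F.connectedComponentMk v).supp := by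
  ext y
  simp only [ConnectedComponent.mem_supp_iff, ConnectedComponent.eq, Set.mem_union,
    reachable_sup_edge_iff]
  grind [Reachable.trans, Reachable.symm]

lemma supp_connectedComponentMk_sup_edge_of_not_reachable (hu : ¬ F.Reachable x u)
    (hv : ¬ F.Reachable x v) :
    ((F ⊔ edge u v).connectedComponentMk x).supp = (F.connectedComponentMk x).supp := by
  ext y
  simp only [ConnectedComponent.mem_supp_iff, ConnectedComponent.eq, reachable_sup_edge_iff]
  grind [Reachable.symm]

@[to_additive]
lemma prod_connectedComponent_sup_edge {M : Type*} [CommMonoid M] [Fintype F.ConnectedComponent]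
    [Fintype (F ⊔ edge u v).ConnectedComponent] (f : Set V → M)
    (h : ¬ F.Reachable u v) :
    (∏ c : F.ConnectedComponent, f c.supp) *
        f ((F.connectedComponentMk u).supp ∪ (F.connectedComponentMk v).supp) =
      f (F.connectedComponentMk u).supp * f (F.connectedComponentMk v).supp *
        ∏ c : (F ⊔ edge u v).ConnectedComponent, f c.supp := by
  classical
  have huv : F.connectedComponentMk v ≠ F.connectedComponentMk u :=
    fun heq ↦ h (ConnectedComponent.exact heq.symm)
  have hmerged := supp_connectedComponentMk_sup_edge (F := F) (u := u) (v := v) (.inl .rfl)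
  have hothers : ∏ c ∈ (univ.erase (F.connectedComponentMk u)).erase (F.connectedComponentMk v),
      f c.supp = ∏ c ∈ univ.erase ((F ⊔ edge u v).connectedComponentMk u), f c.supp := by
    refine prod_nbij (ConnectedComponent.map (.ofLE le_sup_left)) ?_ ?_ ?_ ?_
    · refine ConnectedComponent.ind fun x hx ↦ ?_
      simp only [mem_erase, mem_univ, ne_eq, ConnectedComponent.map_mk, Hom.coe_ofLE, id_eq,
        ConnectedComponent.eq, reachable_sup_edge_iff] at hx ⊢
      grind [Reachable.symm]
    · refine ConnectedComponent.ind fun x hx ↦ ConnectedComponent.ind fun y hy hxy ↦ ?_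
      simp only [mem_coe, mem_erase, mem_univ, ne_eq, ConnectedComponent.map_mk, Hom.coe_ofLE,
        id_eq, ConnectedComponent.eq, reachable_sup_edge_iff] at hx hy hxy ⊢
      grind [Reachable.symm]
    · refine ConnectedComponent.ind fun x hx ↦ ⟨F.connectedComponentMk x, ?_, rfl⟩
      simp only [mem_coe, mem_erase, mem_univ, ne_eq, ConnectedComponent.eq,
        reachable_sup_edge_iff] at hx ⊢
      grind [Reachable.symm, Reachable.refl]
    · refine ConnectedComponent.ind fun x hx ↦ ?_
      simp only [mem_erase, mem_univ, ne_eq, ConnectedComponent.eq] at hx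
      simp only [ConnectedComponent.map_mk, Hom.coe_ofLE, id_eq]
      rw [supp_connectedComponentMk_sup_edge_of_not_reachable (by tauto) (by tauto)]
  rw [← mul_prod_erase univ _ (mem_univ (F.connectedComponentMk u)),
    ← mul_prod_erase _ _ (mem_erase.2 ⟨huv, mem_univ _⟩), hothers,
    ← mul_prod_erase univ _ (mem_univ ((F ⊔ edge u v).connectedComponentMk u)), hmerged]
  ac_rfl

lemma card_connectedComponent_sup_edge_add_one [Finite V] (h : ¬ F.Reachable u v) :
    Nat.card (F ⊔ edge u v).ConnectedComponent + 1 = Nat.card F.ConnectedComponent := by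
  have := Fintype.ofFinite V
  have := sum_connectedComponent_sup_edge (fun _ ↦ 1) h
  simp only [sum_const, card_univ, smul_eq_mul, mul_one] at this
  simp only [Nat.card_eq_fintype_card]
  lia

lemma ncard_edgeSet_sup_edge [Finite V] (h : ¬ F.Reachable u v) :
    (F ⊔ edge u v).edgeSet.ncard = F.edgeSet.ncard + 1 := by
  have hne : u ≠ v := fun huv ↦ h (huv ▸ .rfl)
  have hmem : s(u, v) ∉ F.edgeSet := fun hadj ↦ h (Adj.reachable hadj)
  rw [edgeSet_sup, edgeSet_edge_of_ne hne, Set.union_singleton,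
    Set.ncard_insert_of_notMem hmem]

lemma sdiff_edge_sup_edge (h : F.Adj u v) : F \ edge u v ⊔ edge u v = F :=
  sdiff_sup_cancel ((edge_le_iff _).2 (.inr h))

lemma not_reachable_sdiff_edge (hF : F.IsAcyclic) (h : F.Adj u v) :
    ¬ (F \ edge u v).Reachable u v :=
  isAcyclic_iff_forall_adj_isBridge.1 hF h

lemma sup_edge_sdiff_edge (h : ¬ F.Adj u v) : (F ⊔ edge u v) \ edge u v = F := by
  rw [sup_sdiff_right_self, sdiff_edge _ h]

lemma ncard_edgeSet_sdiff_edge_add_one [Finite V] (hF : F.IsAcyclic) (h : F.Adj u v) :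
    (F \ edge u v).edgeSet.ncard + 1 = F.edgeSet.ncard := by
  rw [← ncard_edgeSet_sup_edge (not_reachable_sdiff_edge hF h), sdiff_edge_sup_edge h]

lemma adj_of_reachable_of_le_isAcyclic (hT : T.IsAcyclic) (hFT : F ≤ T) (hadj : T.Adj u v)
    (h : F.Reachable u v) : F.Adj u v := by
  by_contra hF
  have hle : F ≤ T \ edge u v := by
    rw [← sdiff_edge F hF]
    exact sdiff_le_sdiff_right hFT
  exact not_reachable_sdiff_edge hT hadj (h.mono hle)

lemma connected_of_card_connectedComponent_eq_one
    (h : Nat.card F.ConnectedComponent = 1) : F.Connected := by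
  obtain ⟨_, ⟨c⟩⟩ := Nat.card_eq_one_iff_unique.1 h
  exact (connected_iff _).2
    ⟨fun x y ↦ ConnectedComponent.exact (Subsingleton.elim _ _), c.nonempty_supp.to_type⟩

/-- The number of vertices of the component of `F` containing `v`. -/
noncomputable def componentSize (F : SimpleGraph V) (v : V) : ℕ :=
  (F.connectedComponentMk v).supp.ncard

lemma componentSize_pos [Finite V] (F : SimpleGraph V) (v : V) : 0 < componentSize F v :=
  (Set.ncard_pos (Set.toFinite _)).2 ⟨v, rfl⟩

lemma inv_componentSize_le_one [Finite V] (F : SimpleGraph V) (v : V) :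
    (componentSize F v : ℝ)⁻¹ ≤ 1 :=
  inv_le_one_of_one_le₀ (mod_cast componentSize_pos F v)

lemma componentSize_bot (v : V) : componentSize ⊥ v = 1 := by
  rw [componentSize, Set.ncard_eq_one]
  exact ⟨v, by ext; simp [reachable_bot]⟩

open scoped Classical

variable [Fintype V]

lemma card_filter_connectedComponentMk_eq (c : F.ConnectedComponent) :
    #{x | F.connectedComponentMk x = c} = c.supp.ncard := by
  rw [← Set.ncard_coe_finset]
  congr 1
  ext x
  simp

lemma sum_inv_componentSize (F : SimpleGraph V) :
    ∑ x, (componentSize F x : ℝ)⁻¹ = Nat.card F.ConnectedComponent := by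
  rw [← sum_fiberwise univ F.connectedComponentMk, Nat.card_eq_fintype_card, ← card_univ,
    card_eq_sum_ones, Nat.cast_sum]
  refine sum_congr rfl fun c _ ↦ ?_
  have hc : ∀ x ∈ ({x | F.connectedComponentMk x = c} : Finset V),
      (componentSize F x : ℝ)⁻¹ = (c.supp.ncard : ℝ)⁻¹ := by
    simp +contextual [componentSize]
  have hpos : (c.supp.ncard : ℝ) ≠ 0 := by
    exact_mod_cast ((Set.ncard_pos (Set.toFinite _)).2 c.nonempty_supp).ne'
  rw [sum_congr rfl hc, sum_const, card_filter_connectedComponentMk_eq, nsmul_eq_mul,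
    mul_inv_cancel₀ hpos, Nat.cast_one]

/-- The product of the numbers of vertices of the components of `F`. -/
noncomputable def componentSizeProd (F : SimpleGraph V) : ℕ :=
  ∏ c : F.ConnectedComponent, c.supp.ncard

lemma componentSizeProd_sup_edge (h : ¬ F.Reachable u v) :
    (componentSizeProd (F ⊔ edge u v) : ℝ) =
      componentSizeProd F * ((componentSize F u : ℝ)⁻¹ + (componentSize F v : ℝ)⁻¹) := by
  have hdisj : Disjoint (F.connectedComponentMk u).supp (F.connectedComponentMk v).supp :=
    pairwise_disjoint_supp_connectedComponent F fun heq ↦ h (ConnectedComponent.exact heq)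
  have hmerge : componentSizeProd F * (componentSize F u + componentSize F v) =
      componentSize F u * componentSize F v * componentSizeProd (F ⊔ edge u v) := by
    rw [componentSizeProd, componentSizeProd, componentSize, componentSize,
      ← Set.ncard_union_eq hdisj]
    convert prod_connectedComponent_sup_edge Set.ncard h
  rify at hmerge
  have hu : (componentSize F u : ℝ) ≠ 0 := mod_cast (componentSize_pos F u).ne'
  have hv : (componentSize F v : ℝ) ≠ 0 := mod_cast (componentSize_pos F v).ne'
  field_simp
  linarith

lemma componentSizeProd_bot : componentSizeProd (⊥ : SimpleGraph V) = 1 :=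
  prod_eq_one fun c _ ↦ c.ind componentSize_bot

lemma componentSizeProd_of_connected (hF : F.Connected) :
    componentSizeProd F = Fintype.card V := by
  have := hF.preconnected.subsingleton_connectedComponent
  obtain ⟨v⟩ := hF.nonempty
  have hsupp : (F.connectedComponentMk v).supp = Set.univ :=
    Set.eq_univ_of_forall fun x ↦ ConnectedComponent.sound (hF.preconnected x v)
  rw [componentSizeProd, Fintype.prod_subsingleton _ (F.connectedComponentMk v), hsupp,
    Set.ncard_univ, Nat.card_eq_fintype_card]

/-- The ordered pairs of vertices lying in different components of `F`, i.e. those whose edge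
joins two components. -/
noncomputable def unreachablePairs (F : SimpleGraph V) : Finset (V × V) :=
  {p | ¬ F.Reachable p.1 p.2}

lemma mem_unreachablePairs {p : V × V} : p ∈ unreachablePairs F ↔ ¬ F.Reachable p.1 p.2 := by
  simp [unreachablePairs]

lemma sum_unreachablePairs_fst (f : V → ℝ) :
    ∑ p ∈ unreachablePairs F, f p.1 = ∑ x, (Fintype.card V - componentSize F x) * f x := by
  rw [unreachablePairs, sum_filter, Fintype.sum_prod_type]
  refine sum_congr rfl fun x _ ↦ ?_
  have hx : #{y | F.Reachable x y} = componentSize F x := by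
    simp only [componentSize, ← card_filter_connectedComponentMk_eq, ConnectedComponent.eq,
      reachable_comm]
  dsimp only
  rw [← sum_filter, sum_const, nsmul_eq_mul, ← hx, ← card_univ,
    ← card_filter_add_card_filter_not (s := univ) fun y ↦ F.Reachable x y, Nat.cast_add,
    add_sub_cancel_left]

lemma sum_unreachablePairs_snd (f : V → ℝ) :
    ∑ p ∈ unreachablePairs F, f p.2 = ∑ p ∈ unreachablePairs F, f p.1 :=
  sum_nbij' Prod.swap Prod.swap (by simp [mem_unreachablePairs, reachable_comm])
    (by simp [mem_unreachablePairs, reachable_comm]) (by simp) (by simp) (by simp)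

lemma sum_unreachablePairs_inv_componentSize (F : SimpleGraph V) :
    ∑ p ∈ unreachablePairs F, ((componentSize F p.1 : ℝ)⁻¹ + (componentSize F p.2 : ℝ)⁻¹) =
      2 * Fintype.card V * (Nat.card F.ConnectedComponent - 1) := by
  have hfst : ∑ p ∈ unreachablePairs F, (componentSize F p.1 : ℝ)⁻¹ =
      Fintype.card V * (Nat.card F.ConnectedComponent - 1) := by
    have hpos (x : V) : (componentSize F x : ℝ) ≠ 0 := mod_cast (componentSize_pos F x).ne'
    simp only [sum_unreachablePairs_fst (F := F) fun x ↦ (componentSize F x : ℝ)⁻¹, sub_mul,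
      mul_inv_cancel₀ (hpos _), sum_sub_distrib, ← mul_sum, sum_inv_componentSize]
    simp [mul_sub]
  rw [sum_add_distrib, sum_unreachablePairs_snd fun x ↦ (componentSize F x : ℝ)⁻¹, hfst]
  ring

lemma card_connectedComponent_add_ncard_edgeSet (hF : F.IsAcyclic) :
    Nat.card F.ConnectedComponent + F.edgeSet.ncard = Fintype.card V := by
  induction hk : F.edgeSet.ncard generalizing F with
  | zero =>
    obtain rfl : F = ⊥ := edgeSet_eq_empty.1 ((Set.ncard_eq_zero).1 hk)
    simpa [componentSize_bot] using (sum_inv_componentSize (⊥ : SimpleGraph V)).symm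
  | succ k ih =>
    obtain ⟨⟨u, v⟩, huv : F.Adj u v⟩ := Set.nonempty_of_ncard_ne_zero (hk.trans_ne k.succ_ne_zero)
    have hcard := ncard_edgeSet_sdiff_edge_add_one hF huv
    have hcomp := card_connectedComponent_sup_edge_add_one (not_reachable_sdiff_edge hF huv)
    rw [sdiff_edge_sup_edge huv] at hcomp
    have := ih (F := F \ edge u v) (hF.anti sdiff_le) (by lia)
    lia

/-- The weight `∏ |c| / |V| ^ |E(F)|` of a graph `F`, the product running over its components `c`.
For a forest it is the probability that a uniform spanning tree contains `F`. -/
noncomputable def componentWeight (F : SimpleGraph V) : ℝ :=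
  componentSizeProd F / (Fintype.card V : ℝ) ^ F.edgeSet.ncard

lemma componentWeight_bot : componentWeight (⊥ : SimpleGraph V) = 1 := by
  simp [componentWeight, componentSizeProd_bot]

lemma componentWeight_sup_edge (h : ¬ F.Reachable u v) :
    componentWeight (F ⊔ edge u v) =
      componentWeight F / Fintype.card V *
        ((componentSize F u : ℝ)⁻¹ + (componentSize F v : ℝ)⁻¹) := by
  rw [componentWeight, componentWeight, componentSizeProd_sup_edge h, ncard_edgeSet_sup_edge h,
    pow_succ]
  ring

lemma sum_componentWeight_sup_edge [Nonempty V] (F : SimpleGraph V) :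
    ∑ p ∈ unreachablePairs F, componentWeight (F ⊔ edge p.1 p.2) =
      2 * (Nat.card F.ConnectedComponent - 1) * componentWeight F := by
  have hn : (Fintype.card V : ℝ) ≠ 0 := mod_cast Fintype.card_ne_zero
  rw [sum_congr rfl fun p hp ↦ componentWeight_sup_edge (mem_unreachablePairs.1 hp), ← mul_sum,
    sum_unreachablePairs_inv_componentSize]
  field_simp

/-- The forests on the vertex set `V` with exactly `k` edges. -/
noncomputable def spanningForests (V : Type*) [Fintype V] (k : ℕ) : Finset (SimpleGraph V) :=
  {F | F.IsAcyclic ∧ F.edgeSet.ncard = k}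

lemma mem_spanningForests {k : ℕ} :
    F ∈ spanningForests V k ↔ F.IsAcyclic ∧ F.edgeSet.ncard = k := by
  simp [spanningForests]

lemma card_filter_adj (G : SimpleGraph V) [DecidablePred fun p : V × V ↦ G.Adj p.1 p.2] :
    #{p : V × V | G.Adj p.1 p.2} = 2 * G.edgeSet.ncard := by
  rw [← coe_edgeFinset, Set.ncard_coe_finset, two_mul_card_edgeFinset]
  congr!

lemma sum_spanningForests_succ {M : Type*} [AddCommMonoid M] (f : SimpleGraph V → M) (k : ℕ) :
    (2 * (k + 1)) • ∑ F ∈ spanningForests V (k + 1), f F =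
      ∑ F ∈ spanningForests V k, ∑ p ∈ unreachablePairs F, f (F ⊔ edge p.1 p.2) := by
  have hadj : ∀ F ∈ spanningForests V (k + 1),
      (2 * (k + 1)) • f F = ∑ p : V × V with F.Adj p.1 p.2, f F := by
    intro F hF
    rw [sum_const, card_filter_adj, (mem_spanningForests.1 hF).2]
  rw [smul_sum, sum_congr rfl hadj, sum_sigma', sum_sigma']
  refine sum_nbij' (fun q ↦ ⟨q.1 \ edge q.2.1 q.2.2, q.2⟩)
    (fun q ↦ ⟨q.1 ⊔ edge q.2.1 q.2.2, q.2⟩) ?_ ?_ ?_ ?_ ?_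
  · rintro ⟨F, u, v⟩ h
    simp only [mem_sigma, mem_spanningForests, mem_filter_univ, mem_unreachablePairs] at h ⊢
    obtain ⟨⟨hF, hk⟩, huv⟩ := h
    have := ncard_edgeSet_sdiff_edge_add_one hF huv
    exact ⟨⟨hF.anti sdiff_le, by lia⟩, not_reachable_sdiff_edge hF huv⟩
  · rintro ⟨F, u, v⟩ h
    simp only [mem_sigma, mem_spanningForests, mem_filter_univ, mem_unreachablePairs] at h ⊢
    obtain ⟨⟨hF, hk⟩, huv⟩ := h
    have hne : u ≠ v := fun h ↦ huv (h ▸ .rfl)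
    exact ⟨⟨hF.sup_edge_of_not_reachable huv, by rw [ncard_edgeSet_sup_edge huv, hk]⟩,
      ((edge_le_iff _).1 le_sup_right).resolve_left hne⟩
  · rintro ⟨F, u, v⟩ h
    simp only [mem_sigma, mem_filter_univ] at h
    simp only [sdiff_edge_sup_edge h.2]
  · rintro ⟨F, u, v⟩ h
    simp only [mem_sigma, mem_unreachablePairs] at h
    simp only [sup_edge_sdiff_edge (h.2 ·.reachable)]
  · rintro ⟨F, u, v⟩ h
    simp only [mem_sigma, mem_filter_univ] at h
    simp only [sdiff_edge_sup_edge h.2]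

/-- The spanning trees of the complete graph on `V` that contain every edge of `F`. -/
noncomputable def treesContaining (F : SimpleGraph V) : Finset (SimpleGraph V) :=
  {T | F ≤ T ∧ T.IsTree}

lemma mem_treesContaining : T ∈ treesContaining F ↔ F ≤ T ∧ T.IsTree := by
  simp [treesContaining]

lemma treesContaining_eq_singleton (hF : F.IsTree) : treesContaining F = {F} := by
  ext T
  rw [mem_treesContaining, mem_singleton]
  constructor
  · rintro ⟨hFT, hT⟩
    exact ((isTree_iff_minimal_connected.1 hT).eq_of_le hF.connected hFT).symm
  · rintro rfl
    exact ⟨le_rfl, hF⟩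

lemma treesContaining_sup_edge (h : u ≠ v) :
    treesContaining (F ⊔ edge u v) = {T ∈ treesContaining F | T.Adj u v} := by
  ext T
  simp only [mem_treesContaining, mem_filter, sup_le_iff, edge_le_iff, h, false_or]
  tauto

lemma ncard_edgeSet_add_one_of_isTree (hT : T.IsTree) : T.edgeSet.ncard + 1 = Fintype.card V := by
  rw [← Nat.card_coe_set_eq, (isTree_iff_connected_and_card.1 hT).2, Nat.card_eq_fintype_card]

lemma card_filter_unreachablePairs_adj (hT : T.IsTree) (hFT : F ≤ T) :
    (#{p ∈ unreachablePairs F | T.Adj p.1 p.2} : ℝ) =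
      2 * (Fintype.card V - 1 - F.edgeSet.ncard) := by
  have hnew : {p ∈ unreachablePairs F | T.Adj p.1 p.2} =
      ({p | (T \ F).Adj p.1 p.2} : Finset (V × V)) := by
    ext p
    have hiff : T.Adj p.1 p.2 → (F.Reachable p.1 p.2 ↔ F.Adj p.1 p.2) := fun hadj ↦
      ⟨adj_of_reachable_of_le_isAcyclic hT.isAcyclic hFT hadj, Adj.reachable⟩
    simp only [mem_filter, mem_unreachablePairs, mem_univ, true_and, sdiff_adj]
    tauto
  have hcard : (T \ F).edgeSet.ncard + F.edgeSet.ncard = T.edgeSet.ncard := by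
    rw [edgeSet_sdiff, Set.ncard_sdiff_add_ncard_of_subset (edgeSet_mono hFT)]
  rw [hnew, card_filter_adj, ← ncard_edgeSet_add_one_of_isTree hT, ← hcard]
  push_cast
  ring

lemma sum_card_treesContaining_sup_edge (F : SimpleGraph V) :
    ∑ p ∈ unreachablePairs F, (#(treesContaining (F ⊔ edge p.1 p.2)) : ℝ) =
      #(treesContaining F) * (2 * (Fintype.card V - 1 - F.edgeSet.ncard)) := by
  calc
    _ = ∑ p ∈ unreachablePairs F, (#{T ∈ treesContaining F | T.Adj p.1 p.2} : ℝ) := by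
      refine sum_congr rfl fun p hp ↦ ?_
      have hne : p.1 ≠ p.2 := fun h ↦ mem_unreachablePairs.1 hp (h ▸ .rfl)
      rw [treesContaining_sup_edge hne]
    _ = ∑ T ∈ treesContaining F, (#{p ∈ unreachablePairs F | T.Adj p.1 p.2} : ℝ) := by
      exact_mod_cast sum_card_bipartiteAbove_eq_sum_card_bipartiteBelow
        fun (p : V × V) (T : SimpleGraph V) ↦ T.Adj p.1 p.2
    _ = _ := by
      rw [← nsmul_eq_mul, ← sum_const]
      refine sum_congr rfl fun T hT ↦ ?_
      obtain ⟨hFT, hT⟩ := mem_treesContaining.1 hT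
      exact card_filter_unreachablePairs_adj hT hFT

/-- The probability that a uniform spanning tree of the complete graph on `V` contains `F`. By
Cayley's formula there are `|V| ^ (|V| - 2)` spanning trees; the truncated subtraction is harmless,
since a one-vertex graph has the single spanning tree `⊥`. -/
noncomputable def inclusionProb (F : SimpleGraph V) : ℝ :=
  #(treesContaining F) / (Fintype.card V : ℝ) ^ (Fintype.card V - 2)

lemma inclusionProb_eq_componentWeight_of_isTree (hF : F.IsTree) :
    inclusionProb F = componentWeight F := by
  have := hF.connected.nonempty
  have hn : (Fintype.card V : ℝ) ≠ 0 := mod_cast Fintype.card_ne_zero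
  have hcard := ncard_edgeSet_add_one_of_isTree hF
  rw [inclusionProb, componentWeight, treesContaining_eq_singleton hF, card_singleton,
    componentSizeProd_of_connected hF.connected]
  rcases Nat.eq_zero_or_pos F.edgeSet.ncard with hk | hk
  · simp [show Fintype.card V = 1 by lia, hk]
  · rw [show F.edgeSet.ncard = Fintype.card V - 2 + 1 by lia, pow_succ]
    field_simp
    simp

lemma sum_inclusionProb_sup_edge (F : SimpleGraph V) :
    ∑ p ∈ unreachablePairs F, inclusionProb (F ⊔ edge p.1 p.2) =
      2 * (Fintype.card V - 1 - F.edgeSet.ncard) * inclusionProb F := by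
  simp only [inclusionProb]
  rw [← sum_div, sum_card_treesContaining_sup_edge]
  ring

/-- Both sides satisfy the same recursion when an edge joining two components is added, and they
agree on trees. -/
lemma inclusionProb_eq_componentWeight [Nonempty V] (hF : F.IsAcyclic) :
    inclusionProb F = componentWeight F := by
  obtain ⟨d, hd⟩ : ∃ d, Nat.card F.ConnectedComponent = d + 1 :=
    Nat.exists_eq_succ_of_ne_zero Finite.card_pos.ne'
  induction d generalizing F with
  | zero =>
    exact inclusionProb_eq_componentWeight_of_isTree
      ⟨connected_of_card_connectedComponent_eq_one hd, hF⟩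
  | succ d ih =>
    have hrec : ∑ p ∈ unreachablePairs F, inclusionProb (F ⊔ edge p.1 p.2) =
        ∑ p ∈ unreachablePairs F, componentWeight (F ⊔ edge p.1 p.2) := by
      refine sum_congr rfl fun p hp ↦ ?_
      have hp := mem_unreachablePairs.1 hp
      have := card_connectedComponent_sup_edge_add_one hp
      exact ih (hF.sup_edge_of_not_reachable hp) (by lia)
    have hfactor : (Fintype.card V : ℝ) - 1 - F.edgeSet.ncard =
        Nat.card F.ConnectedComponent - 1 := by
      rw [← card_connectedComponent_add_ncard_edgeSet hF]
      push_cast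
      ring
    have hne : 2 * ((Nat.card F.ConnectedComponent : ℝ) - 1) ≠ 0 := by
      rw [hd]
      push_cast
      rw [add_sub_cancel_right]
      positivity
    rw [sum_inclusionProb_sup_edge, sum_componentWeight_sup_edge, hfactor] at hrec
    exact mul_left_cancel₀ hne hrec

lemma card_unreachablePairs_le (F : SimpleGraph V) :
    (#(unreachablePairs F) : ℝ) ≤ (Fintype.card V : ℝ) ^ 2 := by
  exact_mod_cast (card_le_univ _).trans_eq (by rw [Fintype.card_prod, sq])

lemma sum_sq_inv_componentSize_le (F : SimpleGraph V) :
    ∑ p ∈ unreachablePairs F, ((componentSize F p.1 : ℝ)⁻¹ + (componentSize F p.2 : ℝ)⁻¹) ^ 2 ≤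
      4 * (Fintype.card V : ℝ) ^ 2 := by
  have hterm : ∀ p ∈ unreachablePairs F,
      ((componentSize F p.1 : ℝ)⁻¹ + (componentSize F p.2 : ℝ)⁻¹) ^ 2 ≤ 4 := fun p _ ↦ by
    have h1 := inv_componentSize_le_one F p.1
    have h2 := inv_componentSize_le_one F p.2
    calc _ ≤ (1 + 1 : ℝ) ^ 2 := by gcongr
      _ = 4 := by norm_num
  calc _ ≤ #(unreachablePairs F) • (4 : ℝ) := sum_le_card_nsmul _ _ _ hterm
    _ ≤ 4 * (Fintype.card V : ℝ) ^ 2 := by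
      rw [nsmul_eq_mul]
      linarith [card_unreachablePairs_le F]

/-- Most vertices are isolated in a sparse forest, so a term is typically `(1 + 1) ^ 2`; the tangent
bound `4 * s - 4 ≤ s ^ 2` at `s = 2` turns this into the exact first-power sum. -/
lemma le_sum_sq_inv_componentSize (hF : F.IsAcyclic) :
    4 * (Fintype.card V : ℝ) ^ 2 - 8 * Fintype.card V * (F.edgeSet.ncard + 1) ≤
      ∑ p ∈ unreachablePairs F,
        ((componentSize F p.1 : ℝ)⁻¹ + (componentSize F p.2 : ℝ)⁻¹) ^ 2 := by
  have htangent : ∀ s : ℝ, 4 * s - 4 ≤ s ^ 2 := fun s ↦ by linarith [sq_nonneg (s - 2)]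
  have hcomp : (Nat.card F.ConnectedComponent : ℝ) = Fintype.card V - F.edgeSet.ncard := by
    rw [← card_connectedComponent_add_ncard_edgeSet hF]
    push_cast
    ring
  calc 4 * (Fintype.card V : ℝ) ^ 2 - 8 * Fintype.card V * (F.edgeSet.ncard + 1)
    _ ≤ 4 * (2 * Fintype.card V * (Nat.card F.ConnectedComponent - 1)) -
          4 * #(unreachablePairs F) := by
      rw [hcomp]
      linarith [card_unreachablePairs_le F]
    _ = ∑ p ∈ unreachablePairs F,
          (4 * ((componentSize F p.1 : ℝ)⁻¹ + (componentSize F p.2 : ℝ)⁻¹) - 4) := by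
      rw [sum_sub_distrib, ← mul_sum, sum_unreachablePairs_inv_componentSize, sum_const,
        nsmul_eq_mul, mul_comm (#(unreachablePairs F) : ℝ)]
    _ ≤ _ := sum_le_sum fun p _ ↦ htangent _

/-- The sum over the `k`-edge forests `F` of the squared probability that a uniform spanning tree
contains `F`, i.e. the expected number of `k`-edge forests common to two independent uniform
spanning trees. -/
noncomputable def forestMoment (V : Type*) [Fintype V] (k : ℕ) : ℝ :=
  ∑ F ∈ spanningForests V k, componentWeight F ^ 2

lemma forestMoment_nonneg (V : Type*) [Fintype V] (k : ℕ) : 0 ≤ forestMoment V k :=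
  sum_nonneg fun _ _ ↦ sq_nonneg _

lemma forestMoment_zero (V : Type*) [Fintype V] : forestMoment V 0 = 1 := by
  have hbot : spanningForests V 0 = {⊥} := by
    ext F
    rw [mem_spanningForests, Set.ncard_eq_zero, edgeSet_eq_empty, mem_singleton]
    exact and_iff_right_of_imp fun h ↦ h ▸ isAcyclic_bot
  rw [forestMoment, hbot, sum_singleton, componentWeight_bot, one_pow]

lemma two_mul_forestMoment_succ (V : Type*) [Fintype V] (k : ℕ) :
    2 * (k + 1) * forestMoment V (k + 1) =
      ∑ F ∈ spanningForests V k, componentWeight F ^ 2 *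
        ((∑ p ∈ unreachablePairs F,
          ((componentSize F p.1 : ℝ)⁻¹ + (componentSize F p.2 : ℝ)⁻¹) ^ 2) /
            (Fintype.card V : ℝ) ^ 2) := by
  have hdouble := sum_spanningForests_succ (fun F : SimpleGraph V ↦ componentWeight F ^ 2) k
  rw [nsmul_eq_mul] at hdouble
  push_cast at hdouble
  rw [forestMoment, hdouble]
  refine sum_congr rfl fun F _ ↦ ?_
  rw [sum_div, mul_sum]
  refine sum_congr rfl fun p hp ↦ ?_
  rw [componentWeight_sup_edge (mem_unreachablePairs.1 hp)]
  ring

lemma forestMoment_succ_le (V : Type*) [Fintype V] (k : ℕ) :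
    forestMoment V (k + 1) ≤ 2 / (k + 1) * forestMoment V k := by
  have h : 2 * (k + 1) * forestMoment V (k + 1) ≤ 4 * forestMoment V k := by
    rw [two_mul_forestMoment_succ, mul_comm (4 : ℝ), forestMoment, sum_mul]
    gcongr with F
    exact div_le_of_le_mul₀ (by positivity) (by norm_num) (sum_sq_inv_componentSize_le F)
  rw [div_mul_eq_mul_div, le_div_iff₀ (by positivity)]
  linarith

lemma le_forestMoment_succ (V : Type*) [Fintype V] [Nonempty V] (k : ℕ) :
    2 / (k + 1) * (1 - 2 * (k + 1) / Fintype.card V) * forestMoment V k ≤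
      forestMoment V (k + 1) := by
  have h : 4 * (1 - 2 * (k + 1) / Fintype.card V) * forestMoment V k ≤
      2 * (k + 1) * forestMoment V (k + 1) := by
    rw [two_mul_forestMoment_succ, mul_comm, forestMoment, sum_mul]
    refine sum_le_sum fun F hF ↦ mul_le_mul_of_nonneg_left ?_ (sq_nonneg _)
    obtain ⟨hacyc, rfl⟩ := mem_spanningForests.1 hF
    rw [le_div_iff₀ (by positivity)]
    refine (le_of_eq ?_).trans (le_sum_sq_inv_componentSize hacyc)
    field_simp
    ring
  rw [mul_assoc, div_mul_eq_mul_div, div_le_iff₀ (by positivity)]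
  linarith

lemma pow_succ_div_factorial_succ (r : ℝ) (k : ℕ) :
    r ^ (k + 1) / (k + 1).factorial = r / (k + 1) * (r ^ k / k.factorial) := by
  rw [pow_succ, Nat.factorial_succ]
  push_cast
  field_simp

lemma forestMoment_le (V : Type*) [Fintype V] (k : ℕ) :
    forestMoment V k ≤ 2 ^ k / k.factorial := by
  induction k with
  | zero => simp [forestMoment_zero]
  | succ k ih =>
    calc forestMoment V (k + 1) ≤ 2 / (k + 1) * forestMoment V k := forestMoment_succ_le V k
      _ ≤ 2 / (k + 1) * (2 ^ k / k.factorial) := by gcongr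
      _ = 2 ^ (k + 1) / (k + 1).factorial := (pow_succ_div_factorial_succ 2 k).symm

lemma tendsto_forestMoment (k : ℕ) :
    Tendsto (fun n ↦ forestMoment (Fin n) k) atTop (𝓝 (2 ^ k / k.factorial)) := by
  induction k with
  | zero => simp [forestMoment_zero]
  | succ k ih =>
    have herror : Tendsto (fun n : ℕ ↦ 1 - 2 * (k + 1) / (n : ℝ)) atTop (𝓝 1) := by
      simpa using (tendsto_const_div_atTop_nhds_zero_nat (2 * (k + 1 : ℝ))).const_sub 1
    rw [pow_succ_div_factorial_succ]
    refine tendsto_of_tendsto_of_tendsto_of_le_of_le'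
      (g := fun n : ℕ ↦ 2 / (k + 1) * (1 - 2 * (k + 1) / (n : ℝ)) * forestMoment (Fin n) k)
      (by simpa using (herror.const_mul (2 / (k + 1 : ℝ))).mul ih) (ih.const_mul _) ?_
      (.of_forall fun n ↦ forestMoment_succ_le (Fin n) k)
    filter_upwards [eventually_gt_atTop 0] with n hn
    have : NeZero n := ⟨hn.ne'⟩
    simpa using le_forestMoment_succ (Fin n) k

lemma choose_ncard_edgeSet (hH : H.IsAcyclic) (k : ℕ) :
    H.edgeSet.ncard.choose k = #{F ∈ spanningForests V k | F ≤ H} := by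
  rw [← Set.ncard_powerset_ncard (Set.toFinite _), ← Set.ncard_coe_finset,
    ← Set.ncard_image_of_injective _ edgeSet_injective]
  congr 1
  ext s
  simp only [Set.mem_ofPred_eq, Set.mem_image, coe_filter, mem_spanningForests]
  constructor
  · rintro ⟨hs, hk⟩
    have hedge : (fromEdgeSet s).edgeSet = s := by
      rw [edgeSet_fromEdgeSet, sdiff_eq_left, Set.disjoint_left]
      exact fun e he ↦ H.not_isDiag_of_mem_edgeSet (hs he)
    have hle : fromEdgeSet s ≤ H := edgeSet_subset_edgeSet.1 (hedge.trans_subset hs)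
    exact ⟨fromEdgeSet s, ⟨⟨hH.anti hle, by rw [hedge, hk]⟩, hle⟩, hedge⟩
  · rintro ⟨F, ⟨⟨-, hk⟩, hle⟩, rfl⟩
    exact ⟨edgeSet_mono hle, hk⟩

/-- The ordered pairs of spanning trees of the complete graph on `V`. -/
noncomputable def treePairs (V : Type*) [Fintype V] : Finset (SimpleGraph V × SimpleGraph V) :=
  {p | p.1.IsTree ∧ p.2.IsTree}

lemma card_filter_treePairs_le_inf (F : SimpleGraph V) :
    #{p ∈ treePairs V | F ≤ p.1 ⊓ p.2} = #(treesContaining F) ^ 2 := by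
  rw [sq, ← card_product]
  congr 1
  ext p
  simp only [treePairs, mem_filter, mem_univ, true_and, mem_product, mem_treesContaining,
    le_inf_iff]
  tauto

lemma sum_choose_ncard_edgeSet_inf (V : Type*) [Fintype V] (k : ℕ) :
    ∑ p ∈ treePairs V, (p.1 ⊓ p.2).edgeSet.ncard.choose k =
      ∑ F ∈ spanningForests V k, #(treesContaining F) ^ 2 := by
  calc
    _ = ∑ p ∈ treePairs V, #{F ∈ spanningForests V k | F ≤ p.1 ⊓ p.2} := by
      refine sum_congr rfl fun p hp ↦ choose_ncard_edgeSet ?_ k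
      exact (mem_filter.1 hp).2.1.isAcyclic.anti inf_le_left
    _ = ∑ F ∈ spanningForests V k, #{p ∈ treePairs V | F ≤ p.1 ⊓ p.2} :=
      sum_card_bipartiteAbove_eq_sum_card_bipartiteBelow
        fun (p : SimpleGraph V × SimpleGraph V) (F : SimpleGraph V) ↦ F ≤ p.1 ⊓ p.2
    _ = _ := by simp only [card_filter_treePairs_le_inf]

lemma ncard_edgeSet_inf_lt {p : SimpleGraph V × SimpleGraph V} (hp : p ∈ treePairs V) :
    (p.1 ⊓ p.2).edgeSet.ncard < Fintype.card V := by
  have hle : (p.1 ⊓ p.2).edgeSet.ncard ≤ p.1.edgeSet.ncard :=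
    Set.ncard_le_ncard (edgeSet_mono inf_le_left)
  have := ncard_edgeSet_add_one_of_isTree (mem_filter.1 hp).2.1
  lia

lemma probCommonEdgesEq_eq_card_div (n m : ℕ) :
    probCommonEdgesEq n m =
      #{p ∈ treePairs (Fin n) | (p.1 ⊓ p.2).edgeSet.ncard = m} / (n : ℝ) ^ (2 * (n - 2)) := by
  rw [probCommonEdgesEq, Nat.subtype_card]
  simp only [treePairs, mem_filter, mem_univ, true_and, and_assoc, Nat.card_coe_set_eq,
    implies_true]

lemma binomialMoment_probCommonEdgesEq (n k : ℕ) [NeZero n] :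
    binomialMoment (probCommonEdgesEq n) n k = forestMoment (Fin n) k := by
  calc binomialMoment (probCommonEdgesEq n) n k
    _ = (∑ p ∈ treePairs (Fin n), (p.1 ⊓ p.2).edgeSet.ncard.choose k : ℕ) /
          (n : ℝ) ^ (2 * (n - 2)) := by
      have hmaps : ∀ p ∈ treePairs (Fin n), (p.1 ⊓ p.2).edgeSet.ncard ∈ range n := fun p hp ↦ by
        simpa using ncard_edgeSet_inf_lt hp
      rw [← sum_fiberwise_of_maps_to' hmaps fun m ↦ m.choose k, binomialMoment, Nat.cast_sum,
        sum_div]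
      refine sum_congr rfl fun m _ ↦ ?_
      rw [probCommonEdgesEq_eq_card_div, sum_const, smul_eq_mul]
      push_cast
      ring
    _ = ∑ F ∈ spanningForests (Fin n) k, inclusionProb F ^ 2 := by
      rw [sum_choose_ncard_edgeSet_inf, Nat.cast_sum, sum_div]
      refine sum_congr rfl fun F _ ↦ ?_
      rw [inclusionProb, div_pow, Fintype.card_fin, ← pow_mul, mul_comm 2, Nat.cast_pow]
    _ = forestMoment (Fin n) k := sum_congr rfl fun F hF ↦ by
      rw [inclusionProb_eq_componentWeight (mem_spanningForests.1 hF).1]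

end Forests

end UniformSpanningTree

open UniformSpanningTree in
theorem exponential_moment_limit_general {𝔸 : Type*} [NormedRing 𝔸] [NormedAlgebra ℝ 𝔸]
    [CompleteSpace 𝔸] (z : 𝔸) :
    Filter.Tendsto (fun n ↦ ∑ m ∈ Finset.range n, probCommonEdgesEq n m • z ^ m) Filter.atTop
      (nhds (NormedSpace.exp ((2 : ℝ) • (z - 1)))) := by
  refine tendsto_sum_smul_pow_of_tendsto_binomialMoment (C := 2) (fun k ↦ ?_) ?_ z
  · refine (tendsto_forestMoment k).congr' ?_
    filter_upwards [Filter.eventually_gt_atTop 0] with n hn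
    have : NeZero n := ⟨hn.ne'⟩
    exact (binomialMoment_probCommonEdgesEq n k).symm
  · filter_upwards [Filter.eventually_gt_atTop 0] with n hn k
    have : NeZero n := ⟨hn.ne'⟩
    rw [binomialMoment_probCommonEdgesEq, abs_of_nonneg (forestMoment_nonneg _ _)]
    exact forestMoment_le (Fin n) k

/-- For a fixed real `0 < p ≤ 1`, the expectation
`E[p^(−Xₙ)] = Σ_{m=0}^{n−1} p^(−m) P(Xₙ = m)` converges to `e^(2/p − 2)` as `n → ∞`. -/
theorem exponential_moment_limit (p : ℝ) (hp : 0 < p) (hp1 : p ≤ 1) :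
    Filter.Tendsto
      (fun n => ∑ m ∈ Finset.range n, p ^ (-(m : ℤ)) * probCommonEdgesEq n m)
      Filter.atTop (nhds (Real.exp (2 / p - 2))) := by
  simpa [mul_comm, sub_mul, div_eq_mul_inv, Real.exp_eq_exp_ℝ] using
    exponential_moment_limit_general p⁻¹
end
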